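/- arXiv:2205.06625 — 2 statements merged into one kernel-verified Lean document; each statement's English description precedes it below -/
import Mathlib

section
/- For t ∈ ℝ, let F_t ∈ ℝ⟦X⟧ be the formal power series whose n-th coefficient, for n ≥ 1, is ∑ |Aut(T)|^{−t} summed over the isomorphism classes of rooted labeled trees on n vertices (with constant coefficient 0), and let c(j,t) = j · ∑_{λ ⊢ j} ((−1)^{ℓ(λ)−1}/ℓ(λ)) · (ℓ(λ)!/∏_m λ_m!) · ∏_m (m!)^{−λ_m·t}. Then for every t ∈ ℝ the functional equation F_t = X · exp(∑_{j≥1} (c(j,t)/j) · F_{jt}(X^j)) holds in ℝ⟦X⟧, where c(1,t) = 1, F_{jt}(X^j) is the power series whose n-th coefficient equals the (n/j)-th coefficient of F_{jt} if j divides n and 0 otherwise, and exp(G) = ∑_{k≥0} G^k/k! for a power series G with zero constant term. (The inner sum over j ≥ 1 is coefficientwise finite, since F_{jt}(X^j) has order at least j.) -/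
open scoped Classical BigOperators

/-- A rooted labeled tree on `n` vertices: a simple graph on `Fin n` that is a
tree, together with a distinguished root vertex. -/
structure RTree (n : ℕ) where
  graph : SimpleGraph (Fin n)
  isTree : graph.IsTree
  root : Fin n

namespace RTree

/-- Two rooted labeled trees are isomorphic if there is a graph isomorphism
mapping root to root. -/
def Isom {n : ℕ} (T₁ T₂ : RTree n) : Prop :=
  ∃ φ : T₁.graph ≃g T₂.graph, φ T₁.root = T₂.root

/-- The out-degree (number of children) of a vertex: its degree if it is the
root and its degree minus one otherwise. -/
noncomputable def outdeg {n : ℕ} (T : RTree n) (v : Fin n) : ℕ :=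
  if v = T.root then (T.graph.neighborSet v).ncard
  else (T.graph.neighborSet v).ncard - 1

/-- The number of root-fixing graph automorphisms. -/
noncomputable def autCard {n : ℕ} (T : RTree n) : ℕ :=
  Nat.card {φ : T.graph ≃g T.graph // φ T.root = T.root}

instance finite {n : ℕ} : Finite (RTree n) := by
  have h : Function.Injective (fun T : RTree n => (T.graph, T.root)) := by
    rintro ⟨g₁, h₁, r₁⟩ ⟨g₂, h₂, r₂⟩ h
    simp_all
  exact Finite.of_injective _ h

noncomputable instance fintype {n : ℕ} : Fintype (RTree n) := Fintype.ofFinite _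

end RTree

/-- The isomorphism classes of rooted labeled trees on `n` vertices (Pólya
trees of size `n`). -/
def Polya (n : ℕ) : Type :=
  Quot (fun T₁ T₂ : RTree n => T₁.Isom T₂)

instance (n : ℕ) : Finite (Polya n) :=
  Finite.of_surjective (Quot.mk _) Quot.exists_rep

noncomputable instance (n : ℕ) : Fintype (Polya n) := Fintype.ofFinite _

/-- The coefficient `c(j,t)` of the Pólya-tree functional equation:
`c(j,t) = j · ∑_{λ ⊢ j} ((−1)^{ℓ(λ)−1}/ℓ(λ)) · (ℓ(λ)!/∏_m λ_m!) · ∏_m (m!)^{−λ_m t}`. -/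
noncomputable def polyaC (j : ℕ) (t : ℝ) : ℝ :=
  j * ∑ P : Nat.Partition j,
    ((-1 : ℝ) ^ (Multiset.card P.parts - 1) / (Multiset.card P.parts : ℝ)) *
      (((Multiset.card P.parts).factorial : ℝ) /
        ∏ m ∈ Finset.range (j + 1), ((P.parts.count m).factorial : ℝ)) *
      ∏ m ∈ Finset.range (j + 1),
        ((m.factorial : ℝ)) ^ (-(P.parts.count m : ℝ) * t)

/-- The exponential `exp(G) = ∑_{k ≥ 0} G^k/k!` of a formal power series;
for `G` with zero constant term only the terms with `k ≤ n` contribute to the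
`n`-th coefficient, so the defining truncated sum is exact. -/
noncomputable def pexp (G : PowerSeries ℝ) : PowerSeries ℝ :=
  PowerSeries.mk fun n =>
    ∑ k ∈ Finset.range (n + 1), PowerSeries.coeff n (G ^ k) / (k.factorial : ℝ)

/-- The series `∑_{j ≥ 1} (c(j,t)/j) · F_{jt}(X^j)`, where `F_{jt}(X^j)` is
the substitution of `X^j` into `F (j·t)`: its `n`-th coefficient is the
`(n/j)`-th coefficient of `F (j·t)` when `j ∣ n` and `0` otherwise.  The sum is
coefficientwise finite since `F_{jt}(X^j)` has order at least `j` (each `F s`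
has zero constant coefficient), so only `1 ≤ j ≤ n` contribute. -/
noncomputable def polyaSum (F : ℝ → PowerSeries ℝ) (t : ℝ) : PowerSeries ℝ :=
  PowerSeries.mk fun n =>
    ∑ j ∈ Finset.Icc 1 n,
      (polyaC j t / (j : ℝ)) *
        (if j ∣ n then PowerSeries.coeff (n / j) (F ((j : ℝ) * t)) else 0)


section Part2
open PowerSeries

lemma pp_coeff_pow_congr {f g : PowerSeries ℝ} {N : ℕ} (h : ∀ i ≤ N, coeff i f = coeff i g)
    (k : ℕ) : ∀ i ≤ N, coeff i (f ^ k) = coeff i (g ^ k) := by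
  have h1 : (X : PowerSeries ℝ) ^ (N + 1) ∣ f - g := by
    rw [X_pow_dvd_iff]
    intro m hm
    rw [map_sub, h m (by omega), sub_self]
  have h2 := h1.trans (sub_dvd_pow_sub_pow f g k)
  rw [X_pow_dvd_iff] at h2
  intro i hi
  have := h2 i (by omega)
  rw [map_sub] at this
  linarith

lemma pp_coeff_pow_zero {f : PowerSeries ℝ} (h : constantCoeff f = 0) {n k : ℕ} (hk : n < k) :
    coeff n (f ^ k) = 0 := by
  have h1 : (X : PowerSeries ℝ) ∣ f := X_dvd_iff.2 h
  have h2 := pow_dvd_pow_of_dvd h1 k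
  rw [X_pow_dvd_iff] at h2
  exact h2 n hk

lemma pp_coeff_subst {f : PowerSeries ℝ} (h : constantCoeff f = 0) (g : PowerSeries ℝ) (n : ℕ) :
    coeff n (g.subst f) = ∑ k ∈ Finset.range (n + 1), coeff k g * coeff n (f ^ k) := by
  rw [coeff_subst' (HasSubst.of_constantCoeff_zero' h)]
  rw [finsum_eq_sum_of_support_subset (s := Finset.range (n+1))]
  · simp
  · intro k hk
    simp only [Finset.coe_range, Set.mem_Iio]
    by_contra hc
    apply hk
    simp only [smul_eq_mul]
    rw [pp_coeff_pow_zero h (by omega), mul_zero]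

lemma pexp_eq_subst {G : PowerSeries ℝ} (h : constantCoeff G = 0) :
    pexp G = (PowerSeries.exp ℝ).subst G := by
  ext n
  rw [pp_coeff_subst h, pexp, coeff_mk]
  refine Finset.sum_congr rfl fun k _ => ?_
  rw [coeff_exp]
  simp
  ring

lemma pexp_congr {G H : PowerSeries ℝ} {N : ℕ} (h : ∀ i ≤ N, coeff i G = coeff i H) :
    coeff N (pexp G) = coeff N (pexp H) := by
  simp only [pexp, coeff_mk]
  refine Finset.sum_congr rfl fun k _ => ?_
  rw [pp_coeff_pow_congr h k N le_rfl]

lemma pexp_const (G : PowerSeries ℝ) : constantCoeff (pexp G) = 1 := by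
  rw [← coeff_zero_eq_constantCoeff_apply]
  simp [pexp]

lemma pexp_deriv {G : PowerSeries ℝ} (h : constantCoeff G = 0) :
    d⁄dX ℝ (pexp G) = pexp G * d⁄dX ℝ G := by
  rw [pexp_eq_subst h, derivative_subst (HasSubst.of_constantCoeff_zero' h), derivative_exp]

lemma pp_ode {f g H : PowerSeries ℝ} (hf : constantCoeff f = 1) (hg : constantCoeff g = 1)
    (h1 : d⁄dX ℝ f = f * H) (h2 : d⁄dX ℝ g = g * H) : f = g := by
  have hg0 : constantCoeff g ≠ 0 := by rw [hg]; exact one_ne_zero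
  have : f * g⁻¹ = 1 := by
    apply derivative.ext
    · rw [Derivation.leibniz, derivative_inv', h1, h2, derivative_one]
      simp only [smul_eq_mul]
      have := PowerSeries.mul_inv_cancel g hg0
      linear_combination (-f * g⁻¹ * H) * this
    · simp [hf, hg]
  calc f = f * g⁻¹ * g := by rw [mul_assoc, PowerSeries.inv_mul_cancel g hg0, mul_one]
    _ = g := by rw [this, one_mul]

lemma pexp_add {G H : PowerSeries ℝ} (hG : constantCoeff G = 0) (hH : constantCoeff H = 0) :
    pexp (G + H) = pexp G * pexp H := by
  apply pp_ode (H := d⁄dX ℝ (G + H)) (pexp_const _)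
  · simp [pexp_const]
  · exact pexp_deriv (by simp [hG, hH])
  · rw [Derivation.leibniz, pexp_deriv hG, pexp_deriv hH, map_add]
    simp only [smul_eq_mul]
    ring

lemma pexp_zero : pexp 0 = 1 := by
  apply pp_ode (H := 0) (pexp_const _) (by simp)
  · rw [pexp_deriv (by simp)]; simp
  · simp

lemma pexp_sum {ι : Type*} (s : Finset ι) (G : ι → PowerSeries ℝ)
    (h : ∀ i, constantCoeff (G i) = 0) : pexp (∑ i ∈ s, G i) = ∏ i ∈ s, pexp (G i) := by
  induction s using Finset.induction_on with
  | empty => simp [pexp_zero]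
  | insert a s ha ih =>
    rw [Finset.sum_insert ha, Finset.prod_insert ha, pexp_add (h a), ih]
    rw [map_sum]
    exact Finset.sum_eq_zero fun i _ => h i

lemma pexp_logOf {E : PowerSeries ℝ} (hE : constantCoeff E = 1) : pexp (logOf E) = E := by
  have hs : HasSubst (E - 1) := HasSubst.of_constantCoeff_zero' (by simp [hE])
  have hl : constantCoeff (logOf E) = 0 := constantCoeff_logOf hE
  have hd : d⁄dX ℝ (log ℝ) * (1 + X) = 1 := by
    rw [deriv_log]
    ext n
    rcases n with _ | n
    · simp [mul_add]
    · simp [mul_add, coeff_succ_mul_X, coeff_one, pow_succ]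
  have hD : (d⁄dX ℝ (log ℝ)).subst (E - 1) * E = 1 := by
    have := congrArg (fun f => PowerSeries.subst (E - 1) f) hd
    simp only [subst_mul hs, subst_add hs, subst_X hs] at this
    have h1 : PowerSeries.subst (E - 1) (1 : PowerSeries ℝ) = 1 := by
      rw [← coe_substAlgHom hs, map_one]
    rw [h1] at this
    simpa using this
  apply pp_ode (H := d⁄dX ℝ (logOf E)) (pexp_const _) hE (pexp_deriv hl)
  rw [logOf_eq, derivative_subst hs]
  simp only [map_sub, derivative_one, sub_zero]
  linear_combination (-d⁄dX ℝ E) * hD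

lemma pexp_expand_rescale {L : PowerSeries ℝ} (hL : constantCoeff L = 0) (k : ℕ) (hk : k ≠ 0)
    (b : ℝ) : pexp (expand k hk (rescale b L)) = expand k hk (rescale b (pexp L)) := by
  ext n
  simp only [pexp, coeff_mk, coeff_expand, ← map_pow, coeff_rescale]
  split_ifs with h
  · rw [Finset.mul_sum]
    have : n / k ≤ n := Nat.div_le_self _ _
    rw [← Finset.sum_subset (Finset.range_subset_range.2 (Nat.succ_le_succ this))]
    · exact Finset.sum_congr rfl fun i _ => by ring
    · intro x _ hx
      rw [pp_coeff_pow_zero hL (by simpa using hx)]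
      simp
  · simp

noncomputable def ppE (t : ℝ) : PowerSeries ℝ := PowerSeries.mk fun m => (m.factorial : ℝ) ^ (-t)

lemma ppE_const (t : ℝ) : constantCoeff (ppE t) = 1 := by
  rw [← coeff_zero_eq_constantCoeff_apply]
  simp [ppE]

lemma ppE_coeff_pow (t : ℝ) (j d : ℕ) : coeff j ((ppE t - 1) ^ d) =
    ∑ P : Nat.Partition j with Multiset.card P.parts = d,
      (((Multiset.card P.parts).factorial : ℝ) /
        ∏ m ∈ Finset.range (j + 1), ((P.parts.count m).factorial : ℝ)) *
      ∏ m ∈ Finset.range (j + 1),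
        ((m.factorial : ℝ)) ^ (-(P.parts.count m : ℝ) * t) := by
  have h1 : ∀ i ≤ j, coeff i (ppE t - 1) =
      coeff i (∑ m ∈ Finset.Icc 1 j, monomial m ((m.factorial : ℝ) ^ (-t))) := by
    intro i hi
    rw [map_sum]
    simp only [coeff_monomial, Finset.sum_ite_eq, Finset.mem_Icc, map_sub, coeff_one, ppE, coeff_mk]
    rcases i with _ | i
    · simp
    · simp [hi]
  rw [pp_coeff_pow_congr h1 d j le_rfl, Finset.sum_pow_eq_sum_piAntidiag, map_sum]
  have h2 : ∀ k : ℕ → ℕ, coeff j ((Nat.multinomial (Finset.Icc 1 j) k : PowerSeries ℝ) *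
      ∏ i ∈ Finset.Icc 1 j, (monomial i ((i.factorial : ℝ) ^ (-t))) ^ k i) =
      if ∑ i ∈ Finset.Icc 1 j, k i * i = j then (Nat.multinomial (Finset.Icc 1 j) k : ℝ) *
        ∏ i ∈ Finset.Icc 1 j, ((i.factorial : ℝ) ^ (-t)) ^ k i else 0 := by
    intro k
    have : ∏ i ∈ Finset.Icc 1 j, (monomial i ((i.factorial : ℝ) ^ (-t))) ^ k i =
      monomial (∑ i ∈ Finset.Icc 1 j, k i * i)
        (∏ i ∈ Finset.Icc 1 j, ((i.factorial : ℝ) ^ (-t)) ^ k i) := by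
      induction Finset.Icc 1 j using Finset.induction_on with
      | empty => simp [monomial_zero_eq_C]
      | insert a s ha ih =>
        rw [Finset.prod_insert ha, Finset.sum_insert ha, Finset.prod_insert ha, ih,
          monomial_pow, monomial_mul_monomial]
    rw [this, ← map_natCast (C (R := ℝ)), coeff_C_mul, coeff_monomial, mul_ite, mul_zero]
    simp only [eq_comm]
  rw [Finset.sum_congr rfl fun k _ => h2 k, ← Finset.sum_filter]
  symm
  have hcount : ∀ P : Nat.Partition j, ∀ m, P.parts.count m ≠ 0 → m ∈ Finset.Icc 1 j := by
    intro P m hm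
    have hmem := Multiset.count_ne_zero.1 hm
    rw [Finset.mem_Icc]
    refine ⟨P.parts_pos hmem, ?_⟩
    conv_rhs => rw [← P.parts_sum]
    exact Multiset.le_sum_of_mem hmem
  have hsub : Finset.Icc 1 j ⊆ Finset.range (j + 1) := by
    intro x; simp
  have htf : ∀ P : Nat.Partition j, P.parts.toFinset ⊆ Finset.Icc 1 j := by
    intro P m hm
    exact hcount P m (Multiset.count_ne_zero.2 (Multiset.mem_toFinset.1 hm))
  have hcard : ∀ P : Nat.Partition j,
      ∑ m ∈ Finset.Icc 1 j, P.parts.count m = Multiset.card P.parts := by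
    intro P
    rw [← Multiset.toFinset_sum_count_eq]
    symm
    apply Finset.sum_subset (htf P)
    intro x _ hx
    simpa using hx
  have hsum : ∀ P : Nat.Partition j,
      ∑ m ∈ Finset.Icc 1 j, P.parts.count m * m = j := by
    intro P
    conv_rhs => rw [← P.parts_sum, Finset.sum_multiset_count]
    symm
    apply Finset.sum_subset (htf P)
    intro x _ hx
    simp at hx
    simp [hx]
  refine Finset.sum_bij (fun P _ => fun m => P.parts.count m) ?_ ?_ ?_ ?_
  · intro P hP
    simp only [Finset.mem_filter, Finset.mem_univ, true_and, Finset.mem_piAntidiag] at hP ⊢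
    exact ⟨⟨(hcard P).trans hP, hcount P⟩, hsum P⟩
  · intro P _ Q _ h
    apply Nat.Partition.ext
    ext m
    exact congrFun h m
  · intro k hk
    simp only [Finset.mem_filter, Finset.mem_piAntidiag] at hk
    obtain ⟨⟨hk1, hk2⟩, hk3⟩ := hk
    have hc : ∀ m, (∑ i ∈ Finset.Icc 1 j, Multiset.replicate (k i) i).count m = k m := by
      intro m
      rw [Multiset.count_sum']
      simp only [Multiset.count_replicate, Finset.sum_ite_eq']
      split_ifs with h
      · rfl
      · by_contra hne
        exact h (hk2 m (Ne.symm hne))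
    refine ⟨⟨∑ i ∈ Finset.Icc 1 j, Multiset.replicate (k i) i, ?_, ?_⟩, ?_, ?_⟩
    · intro i hi
      have := hk2 i (by rw [← hc]; exact Multiset.count_ne_zero.2 hi)
      exact (Finset.mem_Icc.1 this).1
    · rw [Multiset.sum_sum]
      simpa using hk3
    · simp [hk1]
    · funext m
      exact hc m
  · intro P hP
    congr 1
    · rw [Nat.multinomial, Nat.cast_div (Nat.prod_factorial_dvd_factorial_sum _ _)
        (by exact_mod_cast (Nat.prod_factorial_pos _ _).ne'), hcard P]
      congr 1
      push_cast
      symm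
      apply Finset.prod_subset hsub
      intro x _ hx
      have : P.parts.count x = 0 := by by_contra h; exact hx (hcount P x h)
      simp [this]
    · symm
      rw [Finset.prod_subset hsub]
      · refine Finset.prod_congr rfl fun m _ => ?_
        rw [← Real.rpow_natCast, ← Real.rpow_mul (by positivity)]
        congr 1
        ring
      · intro x _ hx
        have : P.parts.count x = 0 := by by_contra h; exact hx (hcount P x h)
        simp [this]

lemma coeff_logOf_ppE (t : ℝ) (j : ℕ) (hj : j ≠ 0) :
    coeff j (logOf (ppE t)) = polyaC j t / j := by
  have hj' : (j : ℝ) ≠ 0 := by exact_mod_cast hj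
  rw [logOf_eq, pp_coeff_subst (by simp [ppE_const]), polyaC, mul_div_cancel_left₀ _ hj']
  simp_rw [ppE_coeff_pow, Finset.mul_sum]
  rw [← Finset.sum_fiberwise_of_maps_to (s := Finset.univ) (t := Finset.range (j+1))
    (g := fun P : Nat.Partition j => Multiset.card P.parts)]
  · refine Finset.sum_congr rfl fun d _ => Finset.sum_congr rfl fun P hP => ?_
    simp only [Finset.mem_filter, Finset.mem_univ, true_and] at hP
    have hd : d ≠ 0 := by
      rintro rfl
      rw [Multiset.card_eq_zero] at hP
      apply hj
      rw [← P.parts_sum, hP, Multiset.sum_zero]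
    rw [hP, coeff_log, mul_assoc]
    congr 1
    obtain ⟨e, rfl⟩ := Nat.exists_eq_succ_of_ne_zero hd
    simp [pow_succ]
  · intro P _
    simp only [Finset.mem_range]
    have : Multiset.card P.parts • 1 ≤ P.parts.sum :=
      Multiset.card_nsmul_le_sum fun x hx => P.parts_pos hx
    rw [P.parts_sum] at this
    simp at this
    omega

end Part2

abbrev PQ (N : ℕ) : Type := Σ k : Fin N, Polya (k.1 + 1)

def CombClaim (A : ∀ n : ℕ, Polya n → ℕ) (N : ℕ) : Prop :=
  ∃ e : Polya (N + 1) → (PQ N → ℕ), Function.Injective e ∧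
    (∀ p, ∑ q : PQ N, e p q * (q.1.1 + 1) = N) ∧
    (∀ m : PQ N → ℕ, ∑ q : PQ N, m q * (q.1.1 + 1) = N → ∃ p, e p = m) ∧
    ∀ p, A (N + 1) p = ∏ q : PQ N, (e p q).factorial * (A _ q.2) ^ (e p q)

section Part3
open PowerSeries

noncomputable def ppL (t : ℝ) (k : ℕ) (a : ℝ) : PowerSeries ℝ :=
  expand (k + 1) (Nat.succ_ne_zero k) (rescale (a ^ (-t)) (logOf (ppE t)))

lemma ppL_const (t : ℝ) (k : ℕ) (a : ℝ) : constantCoeff (ppL t k a) = 0 := by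
  rw [ppL, constantCoeff_expand, ← coeff_zero_eq_constantCoeff_apply, coeff_rescale,
    coeff_zero_eq_constantCoeff_apply, constantCoeff_logOf (ppE_const t), mul_zero]

lemma ppL_pexp (t : ℝ) (k : ℕ) (a : ℝ) : pexp (ppL t k a) =
    expand (k + 1) (Nat.succ_ne_zero k) (rescale (a ^ (-t)) (ppE t)) := by
  rw [ppL, pexp_expand_rescale (constantCoeff_logOf (ppE_const t)), pexp_logOf (ppE_const t)]

lemma polyaSum_coeff (A : ∀ n : ℕ, Polya n → ℕ)
    (F : ℝ → PowerSeries ℝ)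
    (hF : ∀ (t : ℝ) (n : ℕ),
      PowerSeries.coeff n (F t) =
        if n = 0 then 0 else ∑ q : Polya n, ((A n q : ℝ)) ^ (-t)) (t : ℝ) (N n : ℕ)
    (hn : n ≤ N) :
    coeff n (polyaSum F t) = coeff n (∑ q : PQ N, ppL t q.1.1 (A _ q.2)) := by
  rcases Nat.eq_zero_or_pos n with rfl | hpos
  · rw [coeff_zero_eq_constantCoeff_apply, coeff_zero_eq_constantCoeff_apply, map_sum,
      Finset.sum_eq_zero fun q _ => ppL_const _ _ _, ← coeff_zero_eq_constantCoeff_apply]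
    simp [polyaSum]
  set g : ℕ → ℝ := fun j => polyaC j t / j * ∑ q : Polya (n / j), ((A _ q : ℝ)) ^ (-(j * t)) with hg
  have h1 : coeff n (polyaSum F t) = ∑ j ∈ n.divisors, g j := by
    rw [polyaSum, coeff_mk]
    simp only [mul_ite, mul_zero]
    rw [← Finset.sum_filter]
    have : n.divisors = {j ∈ Finset.Icc 1 n | j ∣ n} := by
      ext j
      simp only [Nat.mem_divisors, Finset.mem_filter, Finset.mem_Icc]
      constructor
      · rintro ⟨h, _⟩
        exact ⟨⟨Nat.pos_of_dvd_of_pos h hpos, Nat.le_of_dvd hpos h⟩, h⟩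
      · rintro ⟨_, h⟩
        exact ⟨h, by omega⟩
    rw [this]
    refine Finset.sum_congr rfl fun j hj => ?_
    simp only [Finset.mem_filter, Finset.mem_Icc] at hj
    rw [hF, if_neg]
    exact (Nat.div_pos hj.1.2 hj.1.1).ne'
  rw [h1, ← Nat.sum_div_divisors, map_sum, Fintype.sum_sigma]
  rw [Fin.sum_univ_eq_sum_range (fun k => ∑ q : Polya (k + 1), coeff n (ppL t k (A _ q))) N]
  have h2 : ∀ k, ∑ q : Polya (k + 1), coeff n (ppL t k (A _ q)) =
      if (k + 1) ∣ n then g (n / (k + 1)) else 0 := by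
    intro k
    simp only [ppL, coeff_expand, coeff_rescale]
    split_ifs with h
    · have h3 : n / (k + 1) ≠ 0 := (Nat.div_pos (Nat.le_of_dvd hpos h) (by omega)).ne'
      have key : ∀ x s, x = k + 1 → ∑ q : Polya x, ((A _ q : ℝ)) ^ (s : ℝ) =
          ∑ q : Polya (k + 1), ((A _ q : ℝ)) ^ s := by
        rintro _ s rfl; rfl
      simp only [hg]
      rw [key _ _ (Nat.div_div_self h hpos.ne'), Finset.mul_sum]
      refine Finset.sum_congr rfl fun q _ => ?_
      rw [coeff_logOf_ppE t _ h3, mul_comm]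
      congr 1
      rw [← Real.rpow_natCast, ← Real.rpow_mul (by positivity)]
      congr 1
      ring
    · simp
  rw [Finset.sum_congr rfl fun k _ => h2 k, ← Finset.sum_filter]
  refine Finset.sum_bij' (fun d _ => d - 1) (fun k _ => k + 1) ?_ ?_ ?_ ?_ ?_
  · intro d hd
    have := Nat.pos_of_mem_divisors hd
    have h4 := Nat.divisor_le hd
    rw [Finset.mem_filter, Finset.mem_range, Nat.sub_add_cancel this]
    exact ⟨by omega, Nat.dvd_of_mem_divisors hd⟩
  · intro k hk
    rw [Finset.mem_filter] at hk
    exact Nat.mem_divisors.2 ⟨hk.2, hpos.ne'⟩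
  · intro d hd
    have := Nat.pos_of_mem_divisors hd
    omega
  · intro k _; simp
  · intro d hd
    have := Nat.pos_of_mem_divisors hd
    rw [Nat.sub_add_cancel this]

lemma polya_of_comb
    (A : ∀ n : ℕ, Polya n → ℕ)
    (F : ℝ → PowerSeries ℝ)
    (hF : ∀ (t : ℝ) (n : ℕ),
      PowerSeries.coeff n (F t) =
        if n = 0 then 0 else ∑ q : Polya n, ((A n q : ℝ)) ^ (-t))
    (hC : ∀ N, CombClaim A N) :
    ∀ t : ℝ, F t = PowerSeries.X * pexp (polyaSum F t) := by
  intro t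
  ext n
  rcases n with _ | N
  · simp [hF]
  rw [coeff_succ_X_mul, pexp_congr (fun i hi => polyaSum_coeff A F hF t N i hi),
    pexp_sum _ _ (fun q => ppL_const _ _ _), hF, if_neg (Nat.succ_ne_zero N)]
  simp only [ppL_pexp]
  rw [coeff_prod]
  simp only [coeff_expand, coeff_rescale, ppE, coeff_mk]
  obtain ⟨e, hinj, hsum, hsurj, hA⟩ := hC N
  have hz : ∀ l ∈ Finset.finsuppAntidiag (Finset.univ : Finset (PQ N)) N,
      (∏ q : PQ N, if (q.1.1 + 1) ∣ l q then
        ((A _ q.2 : ℝ) ^ (-t)) ^ (l q / (q.1.1 + 1)) * ((l q / (q.1.1 + 1)).factorial : ℝ) ^ (-t)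
        else 0) = if (∀ q : PQ N, (q.1.1 + 1) ∣ l q) then ∏ q : PQ N,
        (((A _ q.2 : ℝ) ^ (-t)) ^ (l q / (q.1.1 + 1)) * ((l q / (q.1.1 + 1)).factorial : ℝ) ^ (-t))
        else 0 := by
    intro l _
    split_ifs with h
    · exact Finset.prod_congr rfl fun q _ => by rw [if_pos (h q)]
    · push Not at h
      obtain ⟨q, hq⟩ := h
      exact Finset.prod_eq_zero (Finset.mem_univ q) (by rw [if_neg hq])
  rw [Finset.sum_congr rfl hz, ← Finset.sum_filter]
  refine Finset.sum_bij (fun p _ => Finsupp.equivFunOnFinite.symm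
    (fun q : PQ N => e p q * (q.1.1 + 1))) ?_ ?_ ?_ ?_
  · intro p _
    simp [Finset.mem_finsuppAntidiag, hsum p]
  · intro p _ p' _ h
    apply hinj
    funext q
    have := congrFun (Finsupp.equivFunOnFinite.symm.injective h) q
    simpa using this
  · intro l hl
    simp only [Finset.mem_filter, Finset.mem_finsuppAntidiag] at hl
    obtain ⟨p, hp⟩ := hsurj (fun q => l q / (q.1.1 + 1)) (by
      refine Eq.trans ?_ hl.1.1
      exact Finset.sum_congr rfl fun q _ => Nat.div_mul_cancel (hl.2 q))
    refine ⟨p, Finset.mem_univ _, ?_⟩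
    ext q
    simp only [Finsupp.equivFunOnFinite_symm_apply_apply, hp]
    exact Nat.div_mul_cancel (hl.2 q)
  · intro p _
    rw [hA p]
    push_cast
    rw [← Real.finsetProd_rpow _ _ (fun q _ => by positivity)]
    refine Finset.prod_congr rfl fun q _ => ?_
    simp only [Finsupp.equivFunOnFinite_symm_apply_apply]
    rw [Nat.mul_div_cancel _ (Nat.succ_pos _), Real.mul_rpow (by positivity) (by positivity),
      mul_comm]
    congr 1
    rw [← Real.rpow_natCast, ← Real.rpow_natCast, ← Real.rpow_mul (by positivity),
      ← Real.rpow_mul (by positivity), mul_comm]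

end Part3

section Part4

abbrev RIso {V W : Type} (G : SimpleGraph V) (r : V) (H : SimpleGraph W) (s : W) : Type :=
  {φ : G ≃g H // φ r = s}

namespace RIso
variable {V W U : Type} {G : SimpleGraph V} {r : V} {H : SimpleGraph W} {s : W}
  {K : SimpleGraph U} {u : U}

def refl' (G : SimpleGraph V) (r : V) : RIso G r G r := ⟨SimpleGraph.Iso.refl, rfl⟩

def symm' (φ : RIso G r H s) : RIso H s G r :=
  ⟨φ.1.symm, by
    have h := φ.1.symm_apply_apply r
    rwa [φ.2] at h⟩

lemma apply_eq_iff (φ : RIso G r H s) (v : V) : φ.1 v = s ↔ v = r := by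
  constructor
  · intro h
    exact φ.1.injective (h.trans φ.2.symm)
  · rintro rfl
    exact φ.2

def trans' (φ : RIso G r H s) (ψ : RIso H s K u) : RIso G r K u :=
  ⟨φ.1.trans ψ.1, by
    have h1 := φ.2
    have h2 := ψ.2
    show ψ.1 (φ.1 r) = u
    rw [h1, h2]⟩

lemma ext' {φ ψ : RIso G r H s} (h : ∀ v, φ.1 v = ψ.1 v) : φ = ψ :=
  Subtype.ext (RelIso.ext h)

lemma card_conj (φ : RIso G r H s) : Nat.card (RIso G r G r) = Nat.card (RIso H s H s) := by
  refine Nat.card_congr ⟨fun ψ => (φ.symm'.trans' ψ).trans' φ,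
    fun ψ => (φ.trans' ψ).trans' φ.symm', fun ψ => ?_, fun ψ => ?_⟩
  · apply ext'
    intro v
    show φ.1.symm (φ.1 (ψ.1 (φ.1.symm (φ.1 v)))) = ψ.1 v
    simp
  · apply ext'
    intro v
    show φ.1 (φ.1.symm (ψ.1 (φ.1 (φ.1.symm v)))) = ψ.1 v
    simp

lemma card_congr_right (φ : RIso H s K u) : Nat.card (RIso G r H s) = Nat.card (RIso G r K u) := by
  refine Nat.card_congr ⟨fun ψ => ψ.trans' φ,
    fun ψ => ψ.trans' φ.symm', fun ψ => ?_, fun ψ => ?_⟩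
  · apply ext'
    intro v
    show φ.1.symm (φ.1 (ψ.1 v)) = ψ.1 v
    simp
  · apply ext'
    intro v
    show φ.1 (φ.1.symm (ψ.1 v)) = ψ.1 v
    simp

end RIso

variable {ι ι' : Type} {V : ι → Type} {V' : ι' → Type}

def glueAdj (G : ∀ i, SimpleGraph (V i)) (r : ∀ i, V i) :
    Option (Σ i, V i) → Option (Σ i, V i) → Prop
  | none, none => False
  | none, some p => p.2 = r p.1
  | some p, none => p.2 = r p.1
  | some p, some q => ∃ i a b, p = ⟨i, a⟩ ∧ q = ⟨i, b⟩ ∧ (G i).Adj a b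

def glue (G : ∀ i, SimpleGraph (V i)) (r : ∀ i, V i) : SimpleGraph (Option (Σ i, V i)) where
  Adj := glueAdj G r
  symm := by
    constructor
    rintro (_ | p) (_ | q) h
    · exact h
    · exact h
    · exact h
    · obtain ⟨i, a, b, h1, h2, h3⟩ := h
      exact ⟨i, b, a, h2, h1, h3.symm⟩
  loopless := by
    constructor
    rintro (_ | p) h
    · exact h
    · obtain ⟨i, a, b, h1, h2, h3⟩ := h
      rw [h1] at h2
      simp at h2
      exact h3.ne h2

variable (G : ∀ i, SimpleGraph (V i)) (r : ∀ i, V i)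
variable (G' : ∀ i, SimpleGraph (V' i)) (r' : ∀ i, V' i)

@[simp] lemma glue_adj_none (p : Σ i, V i) : (glue G r).Adj none (some p) ↔ p.2 = r p.1 := Iff.rfl
@[simp] lemma glue_adj_none' (p : Σ i, V i) : (glue G r).Adj (some p) none ↔ p.2 = r p.1 := Iff.rfl
lemma glue_adj_some (p q : Σ i, V i) : (glue G r).Adj (some p) (some q) ↔
    ∃ i a b, p = ⟨i, a⟩ ∧ q = ⟨i, b⟩ ∧ (G i).Adj a b := Iff.rfl
@[simp] lemma glue_adj_same (i : ι) (a b : V i) :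
    (glue G r).Adj (some ⟨i, a⟩) (some ⟨i, b⟩) ↔ (G i).Adj a b := by
  rw [glue_adj_some]
  constructor
  · rintro ⟨j, c, d, h1, h2, h3⟩
    obtain ⟨rfl, h1⟩ := Sigma.mk.inj_iff.1 h1
    obtain ⟨_, h2⟩ := Sigma.mk.inj_iff.1 h2
    rw [eq_of_heq h1, eq_of_heq h2]
    exact h3
  · intro h
    exact ⟨i, a, b, rfl, rfl, h⟩

lemma glue_adj_fst {p q : Σ i, V i} (h : (glue G r).Adj (some p) (some q)) : p.1 = q.1 := by
  obtain ⟨i, a, b, rfl, rfl, _⟩ := h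
  rfl

lemma glue_connected (hG : ∀ i, (G i).Connected) : (glue G r).Connected := by
  have h : ∀ x, (glue G r).Reachable none x := by
    rintro (_ | ⟨i, a⟩)
    · exact SimpleGraph.Reachable.refl _
    · have h1 : (glue G r).Reachable none (some ⟨i, r i⟩) :=
        SimpleGraph.Adj.reachable (by simp)
      refine h1.trans ?_
      let f : G i →g glue G r := ⟨fun a => some ⟨i, a⟩, fun h => by simpa using h⟩
      exact ((hG i).preconnected (r i) a).map f
  exact ⟨fun x y => (h x).symm.trans (h y)⟩

lemma glue_isTree [Finite ι] [∀ i, Finite (V i)] (hG : ∀ i, (G i).IsTree) : (glue G r).IsTree := by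
  have := Fintype.ofFinite ι
  have := fun i => Fintype.ofFinite (V i)
  have hc := glue_connected G r (fun i => (hG i).connected)
  rw [SimpleGraph.isTree_iff_connected_and_card]
  refine ⟨hc, ?_⟩
  have h1 := hc.card_vert_le_card_edgeSet_add_one
  apply le_antisymm _ h1
  have h2 : ∀ i, Nat.card (G i).edgeSet + 1 = Nat.card (V i) :=
    fun i => (SimpleGraph.isTree_iff_connected_and_card.1 (hG i)).2
  let f : (Σ i, (G i).edgeSet) ⊕ ι → Sym2 (Option (Σ i, V i)) := fun x =>
    match x with
    | Sum.inl ⟨i, e⟩ => e.1.map (fun a => some ⟨i, a⟩)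
    | Sum.inr i => s(none, some ⟨i, r i⟩)
  have h3 : (glue G r).edgeSet ⊆ Set.range f := by
    intro e
    induction e using Sym2.ind with
    | h x y =>
      rw [SimpleGraph.mem_edgeSet]
      rcases x with _ | ⟨i, a⟩ <;> rcases y with _ | ⟨j, b⟩ <;> intro h
      · exact h.elim
      · simp at h
        subst h
        exact ⟨Sum.inr j, rfl⟩
      · simp at h
        subst h
        exact ⟨Sum.inr i, Sym2.eq_swap⟩
      · have := glue_adj_fst G r h
        simp only at this
        subst this
        rw [glue_adj_same] at h
        exact ⟨Sum.inl ⟨i, ⟨s(a, b), h⟩⟩, rfl⟩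
  have h4 : Nat.card (glue G r).edgeSet ≤ Nat.card ((Σ i, (G i).edgeSet) ⊕ ι) := by
    rw [Nat.card_coe_set_eq]
    refine (Set.ncard_le_ncard h3 (Set.toFinite _)).trans ?_
    rw [← Set.image_univ]
    refine (Set.ncard_image_le (Set.toFinite _)).trans ?_
    rw [Set.ncard_univ]
  have h5 : Nat.card (Option (Σ i, V i)) = Nat.card ((Σ i, (G i).edgeSet) ⊕ ι) + 1 := by
    rw [Finite.card_option, Nat.card_sigma, Nat.card_sum, Nat.card_sigma]
    simp only [← h2, Finset.sum_add_distrib]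
    simp
  omega

variable {G r G' r'}

/-- gluing isomorphisms -/
def glueIso (x : Σ σ : ι ≃ ι', ∀ i, RIso (G i) (r i) (G' (σ i)) (r' (σ i))) :
    RIso (glue G r) none (glue G' r') none :=
  ⟨⟨Equiv.optionCongr (Equiv.sigmaCongr x.1 (fun i => (x.2 i).1.toEquiv)), by
    rintro (_ | ⟨i, a⟩) (_ | ⟨j, b⟩)
    · exact Iff.rfl
    · show (x.2 j).1 b = r' (x.1 j) ↔ b = r j
      exact (x.2 j).apply_eq_iff _
    · show (x.2 i).1 a = r' (x.1 i) ↔ a = r i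
      exact (x.2 i).apply_eq_iff _
    · show (glue G' r').Adj (some ⟨x.1 i, (x.2 i).1 a⟩) (some ⟨x.1 j, (x.2 j).1 b⟩) ↔ _
      constructor
      · intro h
        have := x.1.injective (glue_adj_fst _ _ h)
        subst this
        rw [glue_adj_same] at h ⊢
        exact (x.2 i).1.map_rel_iff.1 h
      · intro h
        have : i = j := glue_adj_fst _ _ h
        subst this
        rw [glue_adj_same] at h ⊢
        exact (x.2 i).1.map_rel_iff.2 h⟩, rfl⟩

lemma glueIso_apply (x : Σ σ : ι ≃ ι', ∀ i, RIso (G i) (r i) (G' (σ i)) (r' (σ i))) (i : ι)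
    (a : V i) : (glueIso x).1 (some ⟨i, a⟩) = some ⟨x.1 i, (x.2 i).1 a⟩ := rfl

lemma glueIso_injective : Function.Injective (glueIso (G := G) (r := r) (G' := G') (r' := r')) := by
  rintro ⟨σ, φ⟩ ⟨τ, ψ⟩ h
  have h1 : ∀ i (a : V i), (⟨σ i, (φ i).1 a⟩ : Σ i, V' i) = ⟨τ i, (ψ i).1 a⟩ := by
    intro i a
    have : (glueIso (⟨σ, φ⟩ : Σ σ : ι ≃ ι', ∀ i, RIso (G i) (r i) (G' (σ i)) (r' (σ i)))).1
      (some ⟨i, a⟩) = (glueIso ⟨τ, ψ⟩).1 (some ⟨i, a⟩) := by rw [h]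
    rw [glueIso_apply, glueIso_apply] at this
    exact Option.some.inj this
  have h2 : σ = τ := by
    ext i
    exact congrArg Sigma.fst (h1 i (r i))
  subst h2
  congr 1
  funext i
  apply RIso.ext'
  intro a
  have := h1 i a
  simpa using this

lemma glue_fst_const (hG : ∀ i, (G i).Connected)
    (ψ : RIso (glue G r) none (glue G' r') none) (i : ι) :
    ∃ i' : ι', ∀ a : V i, ∃ b : V' i', ψ.1 (some ⟨i, a⟩) = some ⟨i', b⟩ ∧
      (a = r i → b = r' i') := by
  have hne : ∀ p, ∃ q, ψ.1 (some p) = some q := by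
    intro p
    rcases h : ψ.1 (some p) with _ | q
    · have := (ψ.apply_eq_iff _).1 h
      simp at this
    · exact ⟨q, rfl⟩
  obtain ⟨⟨i', b0⟩, h0⟩ := hne ⟨i, r i⟩
  refine ⟨i', fun a => ?_⟩
  have hP : ∃ b : V' i', ψ.1 (some ⟨i, a⟩) = some ⟨i', b⟩ := by
    have hr := (hG i).preconnected (r i) a
    rw [SimpleGraph.reachable_iff_reflTransGen] at hr
    induction hr with
    | refl => exact ⟨b0, h0⟩
    | tail _ hadj ih =>
      rename_i c d _
      obtain ⟨b, hb⟩ := ih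
      obtain ⟨⟨j, e⟩, he⟩ := hne ⟨i, d⟩
      have h1 : (glue G r).Adj (some ⟨i, c⟩) (some ⟨i, d⟩) := by simpa using hadj
      have h2 := ψ.1.map_rel_iff.2 h1
      rw [hb, he] at h2
      have h3 : i' = j := glue_adj_fst _ _ h2
      subst h3
      exact ⟨e, he⟩
  obtain ⟨b, hb⟩ := hP
  refine ⟨b, hb, ?_⟩
  rintro rfl
  have h1 : (glue G r).Adj none (some ⟨i, r i⟩) := by simp
  have h2 := ψ.1.map_rel_iff.2 h1
  rw [hb, ψ.2] at h2
  exact h2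

lemma glueIso_surjective (hG : ∀ i, (G i).Connected) (hG' : ∀ i, (G' i).Connected) :
    Function.Surjective (glueIso (G := G) (r := r) (G' := G') (r' := r')) := by
  intro ψ
  choose σ f hf hfr using glue_fst_const hG ψ
  choose τ g hg _ using glue_fst_const hG' ψ.symm'
  have hψ1 : ∀ x, ψ.symm'.1 (ψ.1 x) = x := fun x => ψ.1.symm_apply_apply x
  have hψ2 : ∀ x, ψ.1 (ψ.symm'.1 x) = x := fun x => ψ.1.apply_symm_apply x
  have h1 : ∀ i, τ (σ i) = i := by
    intro i
    have := hψ1 (some ⟨i, r i⟩)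
    rw [hf, hg] at this
    exact congrArg Sigma.fst (Option.some.inj this)
  have h2 : ∀ i, σ (τ i) = i := by
    intro i
    have := hψ2 (some ⟨i, r' i⟩)
    rw [hg, hf] at this
    exact congrArg Sigma.fst (Option.some.inj this)
  let σ' : ι ≃ ι' := ⟨σ, τ, h1, h2⟩
  have hbij : ∀ i, Function.Bijective (f i) := by
    intro i
    constructor
    · intro a b hab
      have h3 := hf i a
      rw [hab, ← hf i b] at h3
      have h4 := Option.some.inj (ψ.1.injective h3)
      simpa using h4
    · intro b
      have h3 := hψ2 (some ⟨σ i, b⟩)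
      rw [hg, hf] at h3
      have h4 := Option.some.inj h3
      have key : ∀ j (x : V j), j = i → (⟨σ j, f j x⟩ : Σ i, V' i) = ⟨σ i, b⟩ →
          ∃ a, f i a = b := by
        rintro j x rfl h
        exact ⟨x, by simpa using h⟩
      exact key _ _ (h1 i) h4
  refine ⟨⟨σ', fun i => ⟨⟨Equiv.ofBijective (f i) (hbij i), ?_⟩, ?_⟩⟩, ?_⟩
  · intro a b
    have h3 := ψ.1.map_rel_iff (a := some ⟨i, a⟩) (b := some ⟨i, b⟩)
    rw [hf, hf, glue_adj_same, glue_adj_same] at h3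
    exact h3
  · exact hfr i (r i) rfl
  · apply RIso.ext'
    rintro (_ | ⟨i, a⟩)
    · exact ψ.2.symm
    · rw [glueIso_apply, hf]
      rfl

lemma glueIso_card [Fintype ι] [Finite ι'] [Fintype (ι ≃ ι')] [∀ i, Finite (V i)]
    [∀ i, Finite (V' i)]
    (hG : ∀ i, (G i).Connected) (hG' : ∀ i, (G' i).Connected) :
    Nat.card (RIso (glue G r) none (glue G' r') none) =
      ∑ σ : ι ≃ ι', ∏ i, Nat.card (RIso (G i) (r i) (G' (σ i)) (r' (σ i))) := by
  rw [← Nat.card_eq_of_bijective _ ⟨glueIso_injective, glueIso_surjective hG hG'⟩]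
  have : ∀ (σ : ι ≃ ι') i, Finite (RIso (G i) (r i) (G' (σ i)) (r' (σ i))) := by
    intro σ i
    apply Finite.of_injective (fun φ => (φ.1 : V i → V' (σ i)))
    intro φ ψ h
    exact RIso.ext' fun v => congrFun h v
  rw [Nat.card_sigma]
  simp only [Nat.card_pi]

lemma RTree.exists_of_isTree {V : Type} [Finite V] {G : SimpleGraph V} (hG : G.IsTree) (r : V)
    {n : ℕ} (hn : Nat.card V = n) : ∃ T : RTree n, Nonempty (RIso G r T.graph T.root) := by
  subst hn
  let e := Finite.equivFin V
  let φ := SimpleGraph.Iso.map e G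
  exact ⟨⟨_, φ.isTree_iff.1 hG, φ r⟩, ⟨φ, rfl⟩⟩

lemma root_nbr_exists {V : Type} {G : SimpleGraph V} {r v : V} (p : G.Walk v r) (hv : v ≠ r) :
    ∃ u : ({r}ᶜ : Set V), G.Adj r u ∧ (G.induce {r}ᶜ).Reachable ⟨v, hv⟩ u := by
  induction p with
  | nil => exact absurd rfl hv
  | cons h p ih =>
    rename_i a b c
    by_cases hb : b = c
    · subst hb
      exact ⟨⟨a, hv⟩, h.symm, SimpleGraph.Reachable.refl _⟩
    · obtain ⟨u, hu1, hu2⟩ := ih hb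
      refine ⟨u, hu1, SimpleGraph.Reachable.trans (SimpleGraph.Adj.reachable ?_) hu2⟩
      exact h

lemma root_nbr_unique {V : Type} {G : SimpleGraph V} (hG : G.IsAcyclic) {r : V}
    {u w : ({r}ᶜ : Set V)} (hu : G.Adj r u) (hw : G.Adj r w)
    (h : (G.induce {r}ᶜ).Reachable u w) : u = w := by
  by_contra hne
  obtain ⟨p, hp⟩ := h.exists_isPath
  let f : (G.induce {r}ᶜ) →g G := (SimpleGraph.Embedding.induce _).toHom
  have hf : Function.Injective f := Subtype.val_injective
  have hp' : (p.map f).IsPath := SimpleGraph.Walk.map_isPath_of_injective hf hp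
  let q : G.Walk (u : V) (w : V) := SimpleGraph.Walk.cons hu.symm (SimpleGraph.Walk.cons hw .nil)
  have hq : q.IsPath := by
    have h1 : (u : V) ≠ w := fun h => hne (Subtype.ext h)
    simp [q, SimpleGraph.Walk.cons_isPath_iff, hw.ne, hu.ne', h1]
  have h2 := hG.path_unique ⟨p.map f, hp'⟩ ⟨q, hq⟩
  have h3 : p.map f = q := congrArg Subtype.val h2
  have h4 : r ∈ (p.map f).support := by
    have h5 : r ∈ q.support := by simp [q]
    rw [h3]; exact h5
  rw [SimpleGraph.Walk.support_map, List.mem_map] at h4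
  obtain ⟨x, _, hx⟩ := h4
  exact x.2 hx

lemma tree_decomp {V : Type} [Finite V] {G : SimpleGraph V} (hG : G.IsTree) (r : V) :
    ∃ (ι : Type) (_ : Finite ι) (W : ι → Type) (_ : ∀ i, Finite (W i))
      (H : ∀ i, SimpleGraph (W i)) (s : ∀ i, W i),
      (∀ i, (H i).IsTree) ∧ Nonempty (RIso (glue H s) none G r) := by
  have hac : (G.induce {r}ᶜ).IsAcyclic := hG.isAcyclic.induce _
  have hex : ∀ i : (G.induce {r}ᶜ).ConnectedComponent, ∃ u : i.supp, G.Adj r u.1.1 := by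
    intro i
    induction i using SimpleGraph.ConnectedComponent.ind with
    | h v =>
      obtain ⟨p⟩ := hG.connected.preconnected v.1 r
      obtain ⟨u, hu1, hu2⟩ := root_nbr_exists p v.2
      refine ⟨⟨u, ?_⟩, hu1⟩
      rw [SimpleGraph.ConnectedComponent.mem_supp_iff, SimpleGraph.ConnectedComponent.eq]
      exact hu2.symm
  choose s hs using hex
  refine ⟨(G.induce {r}ᶜ).ConnectedComponent, inferInstance, fun i => i.supp, inferInstance,
    fun i => i.toSimpleGraph, s, fun i => hac.isTree_connectedComponent i, ?_⟩
  let f : Option (Σ i : (G.induce {r}ᶜ).ConnectedComponent, i.supp) → V := fun x =>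
    match x with
    | none => r
    | some p => p.2.1.1
  have hext : ∀ p q : (Σ i : (G.induce {r}ᶜ).ConnectedComponent, i.supp),
      p.2.1 = q.2.1 → p = q := by
    rintro ⟨i, v, hv⟩ ⟨j, w, hw⟩ h
    simp only at h
    subst h
    have : i = j := by
      rw [SimpleGraph.ConnectedComponent.mem_supp_iff] at hv hw
      rw [← hv, hw]
    subst this
    rfl
  have hf : Function.Bijective f := by
    constructor
    · rintro (_ | p) (_ | q) h
      · rfl
      · exact absurd h.symm q.2.1.2
      · exact absurd h p.2.1.2
      · rw [hext p q (Subtype.ext h)]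
    · intro v
      by_cases hv : v = r
      · exact ⟨none, hv.symm⟩
      · exact ⟨some ⟨(G.induce {r}ᶜ).connectedComponentMk ⟨v, hv⟩, ⟨⟨v, hv⟩, rfl⟩⟩, rfl⟩
  have hroot : ∀ p : (Σ i : (G.induce {r}ᶜ).ConnectedComponent, i.supp),
      G.Adj r p.2.1.1 ↔ p.2 = s p.1 := by
    rintro ⟨i, v⟩
    constructor
    · intro h
      apply Subtype.ext
      apply root_nbr_unique hG.isAcyclic h (hs i)
      rw [← SimpleGraph.ConnectedComponent.eq]
      exact v.2.trans (s i).2.symm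
    · intro h
      simp only at h
      rw [h]
      exact hs i
  refine ⟨⟨⟨Equiv.ofBijective f hf, ?_⟩, rfl⟩⟩
  rintro (_ | p) (_ | q)
  · show G.Adj r r ↔ _
    simp
  · exact hroot q
  · show G.Adj _ r ↔ _
    rw [SimpleGraph.adj_comm]
    exact hroot p
  · show G.Adj p.2.1.1 q.2.1.1 ↔ _
    rw [glue_adj_some]
    constructor
    · intro h
      have h1 : (G.induce {r}ᶜ).Adj p.2.1 q.2.1 := h
      have h2 : p.1 = q.1 := by
        have := SimpleGraph.ConnectedComponent.eq.2 h1.reachable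
        rw [← p.2.2, ← q.2.2]
        exact this
      obtain ⟨i, v⟩ := p
      obtain ⟨j, w⟩ := q
      simp only at h2
      subst h2
      exact ⟨i, v, w, rfl, rfl, h⟩
    · rintro ⟨i, a, b, rfl, rfl, h⟩
      exact h

end Part4

section Part5

lemma RTree.isom_equiv (n : ℕ) : Equivalence (fun T₁ T₂ : RTree n => T₁.Isom T₂) where
  refl T := ⟨SimpleGraph.Iso.refl, rfl⟩
  symm := by
    rintro T S ⟨φ, h⟩
    exact ⟨(RIso.symm' ⟨φ, h⟩).1, (RIso.symm' ⟨φ, h⟩).2⟩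
  trans := by
    rintro T S U ⟨φ, h⟩ ⟨ψ, k⟩
    exact ⟨(RIso.trans' ⟨φ, h⟩ ⟨ψ, k⟩).1, (RIso.trans' ⟨φ, h⟩ ⟨ψ, k⟩).2⟩

abbrev Polya.mk' {n : ℕ} (T : RTree n) : Polya n := Quot.mk _ T

lemma Polya.mk_eq {n : ℕ} (T S : RTree n) : Polya.mk' T = Polya.mk' S ↔
    Nonempty (RIso T.graph T.root S.graph S.root) := by
  refine ((RTree.isom_equiv n).quot_mk_eq_iff T S).trans ?_
  exact ⟨fun ⟨φ, h⟩ => ⟨⟨φ, h⟩⟩, fun ⟨⟨φ, h⟩⟩ => ⟨φ, h⟩⟩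

noncomputable def Polya.rep {n : ℕ} (q : Polya n) : RTree n := Quot.out q

lemma Polya.mk_rep {n : ℕ} (q : Polya n) : Polya.mk' q.rep = q := Quot.out_eq q

variable {N : ℕ}

noncomputable abbrev repG (m : PQ N → ℕ) (i : Σ q : PQ N, Fin (m q)) :
    SimpleGraph (Fin (i.1.1.1 + 1)) := i.1.2.rep.graph

noncomputable abbrev repR (m : PQ N → ℕ) (i : Σ q : PQ N, Fin (m q)) :
    Fin (i.1.1.1 + 1) := i.1.2.rep.root

lemma rep_eq_of_iso (q q' : PQ N)
    (h : Nonempty (RIso q.2.rep.graph q.2.rep.root q'.2.rep.graph q'.2.rep.root)) : q = q' := by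
  obtain ⟨k, q⟩ := q
  obtain ⟨k', q'⟩ := q'
  obtain ⟨φ⟩ := h
  have h1 := Fintype.card_congr φ.1.toEquiv
  simp only [Fintype.card_fin] at h1
  have h2 : k = k' := Fin.ext (by omega)
  subst h2
  have h3 := (Polya.mk_eq _ _).2 ⟨φ⟩
  rw [Polya.mk_rep, Polya.mk_rep] at h3
  exact congrArg (Sigma.mk k) h3

lemma repG_tree (m : PQ N → ℕ) (i) : (repG m i).IsTree := i.1.2.rep.isTree

lemma glue_rep_card (m : PQ N → ℕ) :
    Nat.card (Option (Σ i : (Σ q : PQ N, Fin (m q)), Fin (i.1.1.1 + 1))) =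
      ∑ q : PQ N, m q * (q.1.1 + 1) + 1 := by
  rw [Finite.card_option, Nat.card_sigma, Fintype.sum_sigma]
  simp

lemma exists_repTree (m : PQ N → ℕ) (hm : ∑ q : PQ N, m q * (q.1.1 + 1) = N) :
    ∃ T : RTree (N + 1), Nonempty (RIso (glue (repG m) (repR m)) none T.graph T.root) :=
  RTree.exists_of_isTree (glue_isTree _ _ (repG_tree m)) none (by rw [glue_rep_card, hm])

lemma glue_rep_inj (m m' : PQ N → ℕ)
    (h : Nonempty (RIso (glue (repG m) (repR m)) none (glue (repG m') (repR m')) none)) :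
    m = m' := by
  obtain ⟨ψ⟩ := h
  obtain ⟨⟨σ, φ⟩, _⟩ := glueIso_surjective (fun i => (repG_tree m i).connected)
    (fun i => (repG_tree m' i).connected) ψ
  have h1 : ∀ i, i.1 = (σ i).1 := fun i => rep_eq_of_iso _ _ ⟨φ i⟩
  funext q
  have h2 : ∀ m : PQ N → ℕ, Nat.card {i : Σ q : PQ N, Fin (m q) // i.1 = q} = m q := by
    intro m
    rw [Nat.card_congr (Equiv.sigmaSubtype q)]
    simp
  rw [← h2 m, ← h2 m']
  exact Nat.card_congr (σ.subtypeEquiv fun i => by rw [h1 i])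

lemma exists_rep_of_tree (T : RTree (N + 1)) : ∃ m : PQ N → ℕ,
    ∑ q : PQ N, m q * (q.1.1 + 1) = N ∧
    Nonempty (RIso (glue (repG m) (repR m)) none T.graph T.root) := by
  obtain ⟨ι, _, W, _, H, s, hH, ⟨φ⟩⟩ := tree_decomp T.isTree T.root
  have := Fintype.ofFinite ι
  have := fun i => Fintype.ofFinite (W i)
  have hcard : ∑ i, Nat.card (W i) = N := by
    have := Nat.card_congr φ.1.toEquiv
    rw [Finite.card_option, Nat.card_sigma, Nat.card_fin] at this
    omega
  have hk : ∀ i, ∃ k : Fin N, Nat.card (W i) = k.1 + 1 := by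
    intro i
    have h1 : Nat.card (W i) ≤ N := by
      rw [← hcard]
      exact Finset.single_le_sum (f := fun i => Nat.card (W i)) (fun _ _ => Nat.zero_le _)
        (Finset.mem_univ i)
    have h2 : 0 < Nat.card (W i) := Nat.card_pos_iff.2 ⟨⟨s i⟩, inferInstance⟩
    exact ⟨⟨Nat.card (W i) - 1, by omega⟩, by simp only; omega⟩
  choose k hk using hk
  choose S hS using fun i => RTree.exists_of_isTree (hH i) (s i) (hk i)
  let f : ι → PQ N := fun i => ⟨k i, Polya.mk' (S i)⟩
  let m : PQ N → ℕ := fun q => Nat.card {i // f i = q}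
  let σ : ι ≃ Σ q : PQ N, Fin (m q) :=
    (Equiv.sigmaFiberEquiv f).symm.trans (Equiv.sigmaCongrRight fun q => Finite.equivFin _)
  have hσ : ∀ i, Nonempty (RIso (H i) (s i) (repG m (σ i)) (repR m (σ i))) := by
    intro i
    obtain ⟨φ1⟩ := hS i
    have h2 : Nonempty (RIso (S i).graph (S i).root (Polya.mk' (S i)).rep.graph
        (Polya.mk' (S i)).rep.root) := (Polya.mk_eq _ _).1 (Polya.mk_rep _).symm
    obtain ⟨φ2⟩ := h2
    exact ⟨φ1.trans' φ2⟩
  let θ : RIso (glue H s) none (glue (repG m) (repR m)) none :=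
    glueIso ⟨σ, fun i => Classical.choice (hσ i)⟩
  have hiso : Nonempty (RIso (glue (repG m) (repR m)) none T.graph T.root) :=
    ⟨θ.symm'.trans' φ⟩
  refine ⟨m, ?_, hiso⟩
  obtain ⟨ψ⟩ := hiso
  have := Nat.card_congr ψ.1.toEquiv
  rw [glue_rep_card, Nat.card_fin] at this
  omega

lemma glue_rep_aut (m : PQ N → ℕ) :
    Nat.card (RIso (glue (repG m) (repR m)) none (glue (repG m) (repR m)) none) =
      ∏ q : PQ N, (m q).factorial * (q.2.rep.autCard) ^ (m q) := by
  rw [glueIso_card (fun i => (repG_tree m i).connected) (fun i => (repG_tree m i).connected)]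
  let f : (Σ q : PQ N, Fin (m q)) → PQ N := Sigma.fst
  have h1 : ∀ σ : Equiv.Perm (Σ q : PQ N, Fin (m q)),
      ∏ i, Nat.card (RIso (repG m i) (repR m i) (repG m (σ i)) (repR m (σ i))) =
      if f ∘ σ = f then ∏ i : (Σ q : PQ N, Fin (m q)), i.1.2.rep.autCard else 0 := by
    intro σ
    split_ifs with h
    · refine Finset.prod_congr rfl fun i _ => ?_
      have h2 : (σ i).1 = i.1 := congrFun h i
      have key : ∀ q q' : PQ N, q' = q →
        Nat.card (RIso q.2.rep.graph q.2.rep.root q'.2.rep.graph q'.2.rep.root) =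
          q.2.rep.autCard := by
        rintro q _ rfl
        rfl
      exact key _ _ h2
    · have : ∃ i, (σ i).1 ≠ i.1 := by
        by_contra hc
        push Not at hc
        exact h (funext hc)
      obtain ⟨i, hi⟩ := this
      refine Finset.prod_eq_zero (Finset.mem_univ i) ?_
      rw [Nat.card_eq_zero]
      left
      by_contra hne
      rw [not_isEmpty_iff] at hne
      exact hi (rep_eq_of_iso _ _ hne).symm
  rw [Finset.sum_congr rfl fun σ _ => h1 σ, ← Finset.sum_filter, Finset.sum_const, smul_eq_mul,
    ← Fintype.card_subtype, DomMulAct.stabilizer_card, Finset.prod_mul_distrib]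
  congr 1
  · refine Finset.prod_congr rfl fun q _ => ?_
    rw [Fintype.card_congr (Equiv.sigmaSubtype q), Fintype.card_fin]
  · rw [Fintype.prod_sigma]
    simp

lemma combClaim (A : ∀ n : ℕ, Polya n → ℕ)
    (hA : ∀ (n : ℕ) (T : RTree n), A n (Quot.mk _ T) = T.autCard) (N : ℕ) : CombClaim A N := by
  have h1 : ∀ p : Polya (N + 1), ∃ m : PQ N → ℕ,
    ∑ q : PQ N, m q * (q.1.1 + 1) = N ∧
    Nonempty (RIso (glue (repG m) (repR m)) none p.rep.graph p.rep.root) :=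
    fun p => exists_rep_of_tree p.rep
  choose e he1 he2 using h1
  refine ⟨e, ?_, he1, ?_, ?_⟩
  · intro p p' h
    obtain ⟨φ⟩ := he2 p
    obtain ⟨φ'⟩ := he2 p'
    rw [h] at φ
    rw [← p.mk_rep, ← p'.mk_rep]
    exact (Polya.mk_eq _ _).2 ⟨φ.symm'.trans' φ'⟩
  · intro m hm
    obtain ⟨T, ⟨φ⟩⟩ := exists_repTree m hm
    refine ⟨Polya.mk' T, ?_⟩
    apply glue_rep_inj
    obtain ⟨φ'⟩ := he2 (Polya.mk' T)
    obtain ⟨ψ⟩ := (Polya.mk_eq _ _).1 (Polya.mk_rep (Polya.mk' T))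
    exact ⟨(φ'.trans' ψ).trans' φ.symm'⟩
  · intro p
    have hA' : ∀ n (q : Polya n), A n q = q.rep.autCard := by
      intro n q
      rw [← hA]
      congr 1
      exact q.mk_rep.symm
    obtain ⟨φ⟩ := he2 p
    rw [hA']
    simp only [hA']
    rw [← glue_rep_aut, φ.card_conj]
    rfl

end Part5

/-- Let `F t` be the power series whose `n`-th coefficient,
for `n ≥ 1`, is `∑ |Aut(T)|^{−t}` over the isomorphism classes of rooted
labeled trees on `n` vertices (and whose constant coefficient is `0`).  Then
for every real `t` the Pólya functional equation
`F t = X · exp(∑_{j ≥ 1} (c(j,t)/j) · F_{jt}(X^j))` holds. -/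
theorem polya_functional_equation
    (A : ∀ n : ℕ, Polya n → ℕ)
    (hA : ∀ (n : ℕ) (T : RTree n), A n (Quot.mk _ T) = T.autCard)
    (F : ℝ → PowerSeries ℝ)
    (hF : ∀ (t : ℝ) (n : ℕ),
      PowerSeries.coeff n (F t) =
        if n = 0 then 0 else ∑ q : Polya n, ((A n q : ℝ)) ^ (-t)) :
    ∀ t : ℝ, F t = PowerSeries.X * pexp (polyaSum F t) := by
  exact polya_of_comb A F hF (combClaim A hA)
end

section
/- For t ∈ ℝ, let u_t ∈ ℝ⟦X⟧ be the formal power series whose n-th coefficient, for n ≥ 1, is ∑ (2^{b(T)}/|Aut(T)|)^t, summed over the isomorphism classes of rooted labeled trees on n vertices with all out-degrees at most 2, where b(T) is the number of vertices of out-degree 2 (with constant coefficient 0). Then for every t ∈ ℝ the identity u_t = X + X·u_t + 2^{t−1}·X·u_t² + (1 − 2^{t−1})·X·u_{2t}(X²) holds in ℝ⟦X⟧, where u_{2t}(X²) denotes the power series whose n-th coefficient equals the (n/2)-th coefficient of u_{2t} if n is even and 0 otherwise. -/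
open scoped Classical BigOperators

/-- Rooted labeled trees on `n` vertices with all out-degrees at most `2`
(unary-binary trees). -/
def UBTree (n : ℕ) : Type :=
  {T : RTree n // ∀ v, T.outdeg v ≤ 2}

instance (n : ℕ) : Finite (UBTree n) := by
  unfold UBTree; infer_instance

/-- The isomorphism classes of unary-binary rooted labeled trees on `n`
vertices (unary-binary Pólya trees of size `n`). -/
def PolyaUB (n : ℕ) : Type :=
  Quot (fun T₁ T₂ : UBTree n => T₁.1.Isom T₂.1)

instance (n : ℕ) : Finite (PolyaUB n) :=
  Finite.of_surjective (Quot.mk _) Quot.exists_rep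

noncomputable instance (n : ℕ) : Fintype (PolyaUB n) := Fintype.ofFinite _

/-- The number of vertices of out-degree `2`. -/
noncomputable def binCount {n : ℕ} (T : UBTree n) : ℕ :=
  (Finset.univ.filter fun v => T.1.outdeg v = 2).card

/-- Substitution of `X^2` into a power series: the `n`-th coefficient of
`G(X²)` is the `(n/2)`-th coefficient of `G` if `n` is even and `0`
otherwise. -/
noncomputable def subXsq (G : PowerSeries ℝ) : PowerSeries ℝ :=
  PowerSeries.mk fun n => if 2 ∣ n then PowerSeries.coeff (n / 2) G else 0

structure RT where
  V : Type
  fin : Fintype V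
  graph : SimpleGraph V
  tree : graph.IsTree
  root : V

attribute [instance] RT.fin

namespace RT

noncomputable def odg {V : Type} (G : SimpleGraph V) (r v : V) : ℕ :=
  if v = r then (G.neighborSet v).ncard
  else (G.neighborSet v).ncard - 1

theorem odg_pos {V : Type} (G : SimpleGraph V) (r v : V) (h : v = r) :
    odg G r v = (G.neighborSet v).ncard := if_pos h

theorem odg_neg {V : Type} (G : SimpleGraph V) (r v : V) (h : v ≠ r) :
    odg G r v = (G.neighborSet v).ncard - 1 := if_neg h

noncomputable def od (R : RT) (v : R.V) : ℕ := odg R.graph R.root v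

def UB (R : RT) : Prop := ∀ v, R.od v ≤ 2

abbrev Iso (R S : RT) : Type := {φ : R.graph ≃g S.graph // φ R.root = S.root}

instance (R S : RT) : Finite (Iso R S) := by
  have : Function.Injective (fun φ : Iso R S => (φ.1 : R.V → S.V)) := by
    intro a b h
    apply Subtype.ext
    apply RelIso.ext
    intro x
    exact congrFun h x
  exact Finite.of_injective _ this

def Iso.refl (R : RT) : Iso R R := ⟨RelIso.refl _, rfl⟩
def Iso.symm {R S : RT} (f : Iso R S) : Iso S R :=
  ⟨f.1.symm, by have := f.1.symm_apply_apply R.root; rwa [f.2] at this⟩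
def Iso.trans {R S T : RT} (f : Iso R S) (g : Iso S T) : Iso R T :=
  ⟨f.1.trans g.1, by simp [f.2, g.2]⟩

theorem Iso.card_eq {R S : RT} (f : Iso R S) (T : RT) : Nat.card (Iso R T) = Nat.card (Iso S T) := by
  refine Nat.card_congr ⟨fun g => f.symm.trans g, fun g => f.trans g, ?_, ?_⟩
  · intro g; apply Subtype.ext; apply RelIso.ext; intro x; simp [Iso.trans, Iso.symm]
  · intro g; apply Subtype.ext; apply RelIso.ext; intro x; simp [Iso.trans, Iso.symm]

theorem Iso.card_eq' {R S : RT} (f : Iso R S) (T : RT) : Nat.card (Iso T R) = Nat.card (Iso T S) := by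
  refine Nat.card_congr ⟨fun g => g.trans f, fun g => g.trans f.symm, ?_, ?_⟩
  · intro g; apply Subtype.ext; apply RelIso.ext; intro x; simp [Iso.trans, Iso.symm]
  · intro g; apply Subtype.ext; apply RelIso.ext; intro x; simp [Iso.trans, Iso.symm]

theorem Iso.od_eq {R S : RT} (f : Iso R S) (v : R.V) : S.od (f.1 v) = R.od v := by
  have h1 : S.graph.neighborSet (f.1 v) = f.1 '' R.graph.neighborSet v := by
    ext w
    obtain ⟨w, rfl⟩ := f.1.surjective w
    have := f.1.map_adj_iff (v := v) (w := w)
    simpa using this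
  have h2 : (f.1 v = S.root) ↔ v = R.root := by
    have := f.1.injective.eq_iff (a := v) (b := R.root); rwa [f.2] at this
  unfold od odg
  rw [h1, Set.ncard_image_of_injective _ f.1.injective]
  simp only [h2]

theorem Iso.ub {R S : RT} (f : Iso R S) (h : R.UB) : S.UB := by
  intro v
  obtain ⟨v, rfl⟩ := f.1.surjective v
  rw [f.od_eq]; exact h v

noncomputable def bc (R : RT) : ℕ := ∑ v : R.V, if R.od v = 2 then 1 else 0

theorem Iso.bc_eq {R S : RT} (f : Iso R S) : R.bc = S.bc := by
  unfold bc
  refine Fintype.sum_equiv f.1.toEquiv _ _ ?_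
  intro x
  have := f.od_eq x
  simp only [RelIso.coe_fn_toEquiv, this]

noncomputable def w (R : RT) : ℝ := 2 ^ R.bc / (Nat.card (Iso R R) : ℝ)

theorem Iso.w_eq {R S : RT} (f : Iso R S) : R.w = S.w := by
  unfold w
  rw [f.bc_eq, f.card_eq, f.card_eq']

theorem card_pos (R : RT) : 0 < Nat.card (Iso R R) := by
  have : Nonempty (Iso R R) := ⟨Iso.refl R⟩
  exact Nat.card_pos

theorem w_pos (R : RT) : 0 < R.w := by
  have := R.card_pos
  unfold w; positivity

section glue
variable {I : Type} (A : I → RT)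

inductive GAdj : Option (Σ i, (A i).V) → Option (Σ i, (A i).V) → Prop
  | down (i : I) : GAdj none (some ⟨i, (A i).root⟩)
  | up (i : I) : GAdj (some ⟨i, (A i).root⟩) none
  | inn (i : I) (v w : (A i).V) : (A i).graph.Adj v w → GAdj (some ⟨i, v⟩) (some ⟨i, w⟩)

def gg : SimpleGraph (Option (Σ i, (A i).V)) where
  Adj := GAdj A
  symm := ⟨by
    intro a b h
    cases h with
    | down i => exact .up i
    | up i => exact .down i
    | inn i v w h => exact .inn i w v h.symm⟩
  loopless := ⟨by
    intro a h
    cases h with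
    | inn i v w h => exact h.ne rfl⟩

theorem gg_inn {i : I} {v w : (A i).V} : (gg A).Adj (some ⟨i, v⟩) (some ⟨i, w⟩) ↔ (A i).graph.Adj v w := by
  constructor
  · intro h
    cases h with
    | inn i v w h => exact h
  · intro h; exact .inn i v w h

theorem gg_fst {x y : Σ i, (A i).V} (h : (gg A).Adj (some x) (some y)) : x.1 = y.1 := by
  cases h with
  | inn i v w h => rfl

theorem gg_none {i : I} {v : (A i).V} : (gg A).Adj none (some ⟨i, v⟩) ↔ v = (A i).root := by
  constructor
  · intro h
    cases h with
    | down i => rfl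
  · rintro rfl; exact .down i

theorem gg_none' {x : Σ i, (A i).V} : (gg A).Adj none (some x) ↔ x.2 = (A x.1).root := gg_none A

def emb (i : I) : (A i).graph →g gg A := ⟨fun v => some ⟨i, v⟩, fun h => .inn i _ _ h⟩

theorem gg_conn : (gg A).Connected := by
  have : Nonempty (Option (Σ i, (A i).V)) := ⟨none⟩
  have h : ∀ x, (gg A).Reachable none x := by
    intro x
    cases x with
    | none => exact .refl _
    | some x =>
      obtain ⟨i, v⟩ := x
      have h1 : (gg A).Reachable none (some ⟨i, (A i).root⟩) :=
        SimpleGraph.Adj.reachable (GAdj.down (A := A) i)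
      have h2 := ((A i).tree.connected.preconnected (A i).root v).map (emb A i)
      exact h1.trans h2
  exact ⟨fun x y => (h x).symm.trans (h y)⟩

theorem reach_of {V W : Type} (G : SimpleGraph V) (H : SimpleGraph W) (f : V → W)
    (hf : ∀ x y, G.Adj x y → f x = f y ∨ H.Adj (f x) (f y)) {x y : V} (h : G.Reachable x y) :
    H.Reachable (f x) (f y) := by
  obtain ⟨p⟩ := h
  induction p with
  | nil => exact .refl _
  | cons h p ih =>
    rcases hf _ _ h with e | e
    · rw [e]; exact ih
    · exact e.reachable.trans ih

theorem const_of {V W : Type} (G : SimpleGraph V) (f : V → W)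
    (hf : ∀ x y, G.Adj x y → f x = f y) {x y : V} (h : G.Reachable x y) :
    f x = f y := by
  obtain ⟨p⟩ := h
  induction p with
  | nil => rfl
  | cons h p ih => rw [hf _ _ h, ih]

theorem gg_acyc : (gg A).IsAcyclic := by
  rw [SimpleGraph.isAcyclic_iff_forall_adj_isBridge]
  have hd : ∀ i, (gg A).IsBridge s(none, some ⟨i, (A i).root⟩) := by
    intro i
    rw [SimpleGraph.isBridge_iff]
    intro h
    have := const_of _ (fun x : Option (Σ i, (A i).V) => ∃ v, x = some ⟨i, v⟩) ?_ h
    · simp at this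
    · intro x y hxy
      rw [SimpleGraph.deleteEdges_adj] at hxy
      obtain ⟨h1, h2⟩ := hxy
      cases h1 with
      | down j =>
        have : j ≠ i := by rintro rfl; exact h2 (by simp)
        simp [this]
      | up j =>
        have : j ≠ i := by rintro rfl; exact h2 (by simp [Sym2.eq_swap])
        simp [this]
      | inn j v w h =>
        by_cases e : j = i
        · subst e; simp
        · simp [e]
  intro a b h
  cases h with
  | down i => exact hd i
  | up i => rw [Sym2.eq_swap]; exact hd i
  | inn i v w h =>
    have hb := SimpleGraph.isAcyclic_iff_forall_adj_isBridge.1 (A i).tree.isAcyclic h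
    rw [SimpleGraph.isBridge_iff] at hb ⊢
    intro hr
    apply hb
    let f : Option (Σ i, (A i).V) → (A i).V := fun x => match x with
      | none => (A i).root
      | some ⟨j, u⟩ => if e : j = i then e ▸ u else (A i).root
    have key := reach_of _ ((A i).graph.deleteEdges {s(v, w)}) f ?_ hr
    · simpa [f] using key
    · intro x y hxy
      rw [SimpleGraph.deleteEdges_adj] at hxy
      obtain ⟨h1, h2⟩ := hxy
      cases h1 with
      | down j =>
        left
        by_cases e : j = i
        · subst e; simp [f]
        · simp [f, e]
      | up j =>
        left
        by_cases e : j = i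
        · subst e; simp [f]
        · simp [f, e]
      | inn j a b h' =>
        by_cases e : j = i
        · subst e
          right
          simp only [f, dif_pos, SimpleGraph.deleteEdges_adj]
          refine ⟨h', ?_⟩
          intro h3
          apply h2
          simpa using h3
        · left; simp [f, e]

noncomputable def glue [Fintype I] : RT where
  V := Option (Σ i, (A i).V)
  fin := inferInstance
  graph := gg A
  tree := ⟨gg_conn A, gg_acyc A⟩
  root := none

variable [Fintype I]

theorem od_none : (glue A).od none = Fintype.card I := by
  have : (gg A).neighborSet none = Set.range (fun i => (some ⟨i, (A i).root⟩ : Option (Σ i, (A i).V))) := by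
    ext x
    constructor
    · intro h
      cases h with
      | down i => exact ⟨i, rfl⟩
    · rintro ⟨i, rfl⟩
      exact .down i
  change odg (gg A) none none = _
  rw [odg_pos _ _ _ rfl, this, ← Set.image_univ, Set.ncard_image_of_injective, Set.ncard_univ, Nat.card_eq_fintype_card]
  intro i j h
  simp only [Option.some.injEq, Sigma.mk.injEq] at h
  exact h.1

theorem od_some (i : I) (v : (A i).V) : (glue A).od (some ⟨i, v⟩) = (A i).od v := by
  have hi : Function.Injective (fun w => (some ⟨i, w⟩ : Option (Σ i, (A i).V))) := by
    intro a b h; simpa using h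
  have h0 : (some ⟨i, v⟩ : Option (Σ i, (A i).V)) ≠ none := by
    intro h; cases h
  change odg (gg A) none _ = odg _ _ _
  rw [odg_neg _ _ _ h0]
  by_cases hv : v = (A i).root
  · have : (gg A).neighborSet (some ⟨i, v⟩) = insert none
      ((fun w => (some ⟨i, w⟩ : Option (Σ i, (A i).V))) '' (A i).graph.neighborSet v) := by
      subst hv
      ext x
      constructor
      · intro h
        cases h with
        | up i => left; rfl
        | inn i v w h => right; exact ⟨w, h, rfl⟩
      · rintro (rfl | ⟨w, h, rfl⟩)
        · exact .up i
        · exact .inn i _ _ h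
    rw [odg_pos _ _ _ hv, this, Set.ncard_insert_of_notMem (by simp) (Set.toFinite _), Set.ncard_image_of_injective _ hi]
    simp
  · have : (gg A).neighborSet (some ⟨i, v⟩) = 
      ((fun w => (some ⟨i, w⟩ : Option (Σ i, (A i).V))) '' (A i).graph.neighborSet v) := by
      ext x
      constructor
      · intro h
        cases h with
        | up i => exact absurd rfl hv
        | inn i v w h => exact ⟨w, h, rfl⟩
      · rintro ⟨w, h, rfl⟩
        exact .inn i _ _ h
    rw [odg_neg _ _ _ hv, this, Set.ncard_image_of_injective _ hi]

theorem ub_glue : (glue A).UB ↔ Fintype.card I ≤ 2 ∧ ∀ i, (A i).UB := by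
  constructor
  · intro h
    refine ⟨by rw [← od_none A]; exact h none, fun i v => ?_⟩
    rw [← od_some A]; exact h _
  · rintro ⟨h1, h2⟩ v
    rcases v with _ | ⟨i, v⟩
    · exact (od_none A).trans_le h1
    · exact (od_some A i v).trans_le (h2 i v)

theorem bc_glue : (glue A).bc = (if Fintype.card I = 2 then 1 else 0) + ∑ i, (A i).bc := by
  have : (glue A).bc = ∑ v : Option (Σ i, (A i).V), if (glue A).od v = 2 then 1 else 0 := rfl
  rw [this, Fintype.sum_option, Fintype.sum_sigma, od_none]
  simp only [od_some]
  rfl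

theorem card_glue : Fintype.card (glue A).V = (∑ i, Fintype.card (A i).V) + 1 := by
  have : Fintype.card (glue A).V = Fintype.card (Option (Σ i, (A i).V)) := rfl
  rw [this, Fintype.card_option, Fintype.card_sigma]

end glue

set_option linter.unusedSectionVars false

section isoglue
variable {I J : Type} [Fintype I] [Fintype J] {A : I → RT} {B : J → RT}

def mkEquiv (σ : I ≃ J) (ψ : ∀ i, Iso (A i) (B (σ i))) :
    Option (Σ i, (A i).V) ≃ Option (Σ i, (B i).V) :=
  Equiv.optionCongr (Equiv.sigmaCongr σ (fun i => (ψ i).1.toEquiv))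

theorem mkEquiv_none (σ : I ≃ J) (ψ : ∀ i, Iso (A i) (B (σ i))) : mkEquiv σ ψ none = none := rfl
theorem mkEquiv_some (σ : I ≃ J) (ψ : ∀ i, Iso (A i) (B (σ i))) (i : I) (v : (A i).V) :
    mkEquiv σ ψ (some ⟨i, v⟩) = some ⟨σ i, (ψ i).1 v⟩ := rfl

theorem mkEquiv_adj (σ : I ≃ J) (ψ : ∀ i, Iso (A i) (B (σ i))) (x y : Option (Σ i, (A i).V)) :
    (gg B).Adj (mkEquiv σ ψ x) (mkEquiv σ ψ y) ↔ (gg A).Adj x y := by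
  have key : ∀ i v, (gg B).Adj none (some ⟨σ i, (ψ i).1 v⟩) ↔ (gg A).Adj none (some ⟨i, v⟩) := by
    intro i v
    rw [gg_none, gg_none, ← (ψ i).1.injective.eq_iff, (ψ i).2]
  rcases x with _ | ⟨i, v⟩ <;> rcases y with _ | ⟨j, w⟩
  · simp
  · rw [mkEquiv_none, mkEquiv_some]; exact key j w
  · rw [mkEquiv_none, mkEquiv_some, (gg B).adj_comm, (gg A).adj_comm]; exact key i v
  · rw [mkEquiv_some, mkEquiv_some]
    constructor
    · intro h
      have e := gg_fst B h
      obtain rfl := σ.injective e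
      rw [gg_inn] at h ⊢
      exact (ψ i).1.map_adj_iff.1 h
    · intro h
      have e := gg_fst A h
      dsimp only at e
      subst e
      rw [gg_inn] at h ⊢
      exact (ψ i).1.map_adj_iff.2 h

def mkIso (p : Σ σ : I ≃ J, ∀ i, Iso (A i) (B (σ i))) : Iso (glue A) (glue B) :=
  ⟨⟨mkEquiv p.1 p.2, fun {x y} => mkEquiv_adj p.1 p.2 x y⟩, rfl⟩

theorem mkIso_inj : Function.Injective (mkIso (A := A) (B := B)) := by
  rintro ⟨σ, ψ⟩ ⟨τ, χ⟩ h
  have h1 : ∀ i v, (some ⟨σ i, (ψ i).1 v⟩ : Option (Σ i, (B i).V)) = some ⟨τ i, (χ i).1 v⟩ := by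
    intro i v
    exact congrArg (fun f : Iso (glue A) (glue B) => f.1 (some ⟨i, v⟩ : Option (Σ i, (A i).V))) h
  have h2 : σ = τ := by
    ext i
    have := h1 i (A i).root
    simp only [Option.some.injEq, Sigma.mk.injEq] at this
    exact this.1
  subst h2
  congr 1
  funext i
  apply Subtype.ext
  apply RelIso.ext
  intro v
  have := h1 i v
  simpa using this

theorem fst_const (f : Option (Σ i, (A i).V) → Option (Σ i, (B i).V))
    (hf : ∀ x y, (gg A).Adj x y → (gg B).Adj (f x) (f y)) (h0 : f none = none)
    (hs : ∀ x, f x = none → x = none) (i : I) :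
    ∃ j, f (some ⟨i, (A i).root⟩) = some ⟨j, (B j).root⟩ ∧ ∀ v, ∃ w, f (some ⟨i, v⟩) = some ⟨j, w⟩ := by
  have h1 := hf _ _ (GAdj.down (A := A) i)
  rw [h0] at h1
  generalize hz : f (some ⟨i, (A i).root⟩) = z at h1
  cases h1 with
  | down j =>
  refine ⟨j, rfl, fun v => ?_⟩
  have := const_of (A i).graph (fun v => ∃ w, f (some ⟨i, v⟩) = some ⟨j, w⟩) ?_
    ((A i).tree.connected.preconnected (A i).root v)
  · exact this.mp ⟨_, hz⟩
  · intro x y hxy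
    have h2 := hf _ _ (GAdj.inn (A := A) i x y hxy)
    generalize hx : f (some ⟨i, x⟩) = a at h2
    generalize hy : f (some ⟨i, y⟩) = b at h2
    cases h2 with
    | down k => exact absurd (hs _ hx) (by simp)
    | up k => exact absurd (hs _ hy) (by simp)
    | inn k v w h => 
      simp only [eq_iff_iff, Option.some.injEq, Sigma.mk.injEq]
      constructor
      · rintro ⟨_, rfl, _⟩; exact ⟨w, rfl, HEq.rfl⟩
      · rintro ⟨_, rfl, _⟩; exact ⟨v, rfl, HEq.rfl⟩

theorem mkIso_surj : Function.Surjective (mkIso (A := A) (B := B)) := by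
  intro φ
  let f : Option (Σ i, (A i).V) ≃ Option (Σ i, (B i).V) := φ.1.toEquiv
  have f0 : f none = none := φ.2
  have g0 : f.symm none = none := by rw [Equiv.symm_apply_eq, f0]
  have fa : ∀ x y, (gg B).Adj (f x) (f y) ↔ (gg A).Adj x y := fun x y => φ.1.map_adj_iff
  have h1 := fst_const (A := A) (B := B) f (fun x y h => (fa x y).2 h) f0
    (fun x hx => by rw [← g0, ← hx]; simp)
  have h2 := fst_const (A := B) (B := A) f.symm (fun x y h => by rw [← fa]; simpa using h) g0
    (fun x hx => by rw [← f0, ← hx]; simp)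
  choose σ hσ g hg using h1
  choose τ hτ k hk using h2
  have e1 : ∀ i, τ (σ i) = i := by
    intro i
    have := hk (σ i) (B (σ i)).root
    rw [← hσ i] at this
    simp only [Equiv.symm_apply_apply, Option.some.injEq, Sigma.mk.injEq] at this
    exact this.1.symm
  have e2 : ∀ j, σ (τ j) = j := by
    intro j
    have := hg (τ j) (A (τ j)).root
    rw [← hτ j] at this
    simp only [Equiv.apply_symm_apply, Option.some.injEq, Sigma.mk.injEq] at this
    exact this.1.symm
  have gi : ∀ i, Function.Injective (g i) := by
    intro i v w h
    have h3 : f (some ⟨i, v⟩) = f (some ⟨i, w⟩) := by rw [hg, hg, h]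
    simpa using h3
  have gs : ∀ i, Function.Surjective (g i) := by
    intro i w
    have h3 : ∀ j, j = σ i → ∀ w : (B j).V, ∃ v, f (some ⟨i, v⟩) = some ⟨j, w⟩ := by
      intro j hj w
      have h4 := hk j w
      have h5 : τ j = i := by rw [hj, e1]
      generalize k j w = z at h4
      subst h5
      refine ⟨z, ?_⟩
      rw [← h4]; simp
    obtain ⟨v, hv⟩ := h3 _ rfl w
    rw [hg] at hv
    exact ⟨v, by simpa using hv⟩
  refine ⟨⟨⟨σ, τ, e1, e2⟩, fun i => ⟨⟨Equiv.ofBijective (g i) ⟨gi i, gs i⟩, ?_⟩, ?_⟩⟩, ?_⟩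
  · intro v w
    change (B (σ i)).graph.Adj (g i v) (g i w) ↔ _
    rw [← gg_inn B, ← hg, ← hg, fa, gg_inn]
  · change g i (A i).root = (B (σ i)).root
    have := hg i (A i).root
    rw [hσ] at this
    simpa using this.symm
  · apply Subtype.ext
    apply RelIso.ext
    intro x
    change _ = f x
    rcases x with _ | ⟨i, v⟩
    · exact f0.symm
    · exact (hg i v).symm

noncomputable def isoGlue : (Σ σ : I ≃ J, ∀ i, Iso (A i) (B (σ i))) ≃ Iso (glue A) (glue B) :=
  Equiv.ofBijective mkIso ⟨mkIso_inj, mkIso_surj⟩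

end isoglue

theorem exists_child {V : Type} (G : SimpleGraph V) (r : V) (x : V) (p : G.Reachable x r) (hx : x ≠ r) :
    ∃ y : {v // v ≠ r}, G.Adj r y.1 ∧ (G.induce {v | v ≠ r}).Reachable y ⟨x, hx⟩ := by
  obtain ⟨p⟩ := p
  induction p with
  | nil => exact absurd rfl hx
  | @cons a b c h p ih =>
    by_cases hb : b = c
    · subst hb
      exact ⟨⟨a, hx⟩, h.symm, .refl _⟩
    · obtain ⟨y, hy, hr⟩ := ih hb
      refine ⟨y, hy, hr.trans ?_⟩
      apply SimpleGraph.Adj.reachable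
      exact h.symm

theorem unique_child {V : Type} (G : SimpleGraph V) (hG : G.IsAcyclic) (r : V) (y y' : {v // v ≠ r})
    (h : G.Adj r y.1) (h' : G.Adj r y'.1) (hr : (G.induce {v | v ≠ r}).Reachable y y') : y = y' := by
  by_contra hne
  have hb := SimpleGraph.isAcyclic_iff_forall_adj_isBridge.1 hG h
  rw [SimpleGraph.isBridge_iff] at hb
  apply hb
  have h1 : (G.deleteEdges {s(r, y.1)}).Adj r y'.1 := by
    rw [SimpleGraph.deleteEdges_adj]
    refine ⟨h', ?_⟩
    intro e
    simp only [Set.mem_singleton_iff, Sym2.eq_iff] at e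
    rcases e with e | e
    · exact hne (Subtype.ext e.2.symm)
    · exact y'.2 e.2
  refine h1.reachable.trans ?_
  refine reach_of _ _ Subtype.val ?_ hr.symm
  intro a b hab
  right
  rw [SimpleGraph.deleteEdges_adj]
  refine ⟨hab, ?_⟩
  intro e
  simp only [Set.mem_singleton_iff, Sym2.eq_iff] at e
  rcases e with e | e
  · exact a.2 e.1
  · exact b.2 e.2

theorem decomp (R : RT) : ∃ (I : Type) (_ : Fintype I) (A : I → RT), Nonempty (Iso (glue A) R) := by
  let H := R.graph.induce {v | v ≠ R.root}
  have hex : ∀ c : H.ConnectedComponent, ∃ y : c.supp, R.graph.Adj R.root y.1.1 := by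
    intro c
    induction c using SimpleGraph.ConnectedComponent.ind with
    | h x =>
    obtain ⟨y, hy, hr⟩ := exists_child R.graph R.root x.1 (R.tree.connected.preconnected _ _) x.2
    exact ⟨⟨y, SimpleGraph.ConnectedComponent.sound hr⟩, hy⟩
  choose ρ hρ using hex
  let A : H.ConnectedComponent → RT := fun c =>
    { V := c.supp
      fin := Fintype.ofFinite _
      graph := H.induce c.supp
      tree := ⟨c.connected_toSimpleGraph, (R.tree.isAcyclic.induce _).induce _⟩
      root := ρ c }
  have : Fintype H.ConnectedComponent := Fintype.ofFinite _
  refine ⟨H.ConnectedComponent, this, A, ⟨?_⟩⟩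
  let g : Option (Σ c, (A c).V) → R.V := fun x => match x with
    | none => R.root
    | some ⟨c, x⟩ => x.1.1
  have hn : ∀ x : Σ c, (A c).V, x.2.1.1 ≠ R.root := fun x => x.2.1.2
  have hc : ∀ x : Σ c, (A c).V, H.connectedComponentMk x.2.1 = x.1 := fun x => x.2.2
  have hinj : ∀ x y : Σ c, (A c).V, x.2.1 = y.2.1 → x = y := by
    intro x y h
    have h1 : x.1 = y.1 :=
      (hc x).symm.trans ((congrArg H.connectedComponentMk h).trans (hc y))
    obtain ⟨c, x⟩ := x
    obtain ⟨d, y⟩ := y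
    dsimp only at h1
    subst h1
    congr 1
    exact Subtype.ext h
  have gb : Function.Bijective g := by
    constructor
    · rintro (_ | x) (_ | y) h
      · rfl
      · exact absurd h.symm (hn y)
      · exact absurd h (hn x)
      · exact congrArg some (hinj x y (Subtype.ext h))
    · intro v
      by_cases hv : v = R.root
      · exact ⟨none, hv.symm⟩
      · exact ⟨some ⟨H.connectedComponentMk ⟨v, hv⟩, ⟨⟨v, hv⟩, rfl⟩⟩, rfl⟩
  have key : ∀ y, R.graph.Adj R.root (g (some y)) ↔ (gg A).Adj none (some y) := by
    rintro ⟨c, y⟩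
    rw [gg_none]
    constructor
    · intro h
      apply Subtype.ext
      refine unique_child R.graph R.tree.isAcyclic R.root _ _ h (hρ c) ?_
      apply SimpleGraph.ConnectedComponent.exact
      exact (hc ⟨c, y⟩).trans (hc ⟨c, ρ c⟩).symm
    · rintro rfl; exact hρ c
  refine ⟨⟨Equiv.ofBijective g gb, ?_⟩, rfl⟩
  intro x y
  change R.graph.Adj (g x) (g y) ↔ (gg A).Adj x y
  rcases x with _ | x <;> rcases y with _ | y
  · simp [g]
  · exact key y
  · rw [(gg A).adj_comm, R.graph.adj_comm]; exact key x
  · constructor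
    · intro h
      have h' : H.Adj x.2.1 y.2.1 := h
      have h1 : x.1 = y.1 := 
        (hc x).symm.trans ((SimpleGraph.ConnectedComponent.sound h'.reachable).trans (hc y))
      obtain ⟨c, x⟩ := x
      obtain ⟨d, y⟩ := y
      dsimp only at h1
      subst h1
      rw [gg_inn]
      exact h'
    · intro h
      have h1 := gg_fst A h
      obtain ⟨c, x⟩ := x
      obtain ⟨d, y⟩ := y
      dsimp only at h1
      subst h1
      rw [gg_inn] at h
      exact h

theorem decomp' (R : RT) (h : R.UB) : ∃ (k : ℕ) (A : Fin k → RT), k ≤ 2 ∧ (∀ i, (A i).UB) ∧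
    Nonempty (Iso (glue A) R) := by
  obtain ⟨I, _, A, ⟨φ⟩⟩ := decomp R
  have h1 := (ub_glue A).1 (φ.symm.ub h)
  refine ⟨Fintype.card I, A ∘ (Fintype.equivFin I).symm, h1.1, fun i => h1.2 _, ⟨?_⟩⟩
  exact (mkIso ⟨(Fintype.equivFin I).symm, fun i => Iso.refl _⟩).trans φ

theorem card_iso_glue {I : Type} [Fintype I] (A : I → RT) :
    Nat.card (Iso (glue A) (glue A)) = ∑ σ : I ≃ I, ∏ i, Nat.card (Iso (A i) (A (σ i))) := by
  rw [← Nat.card_congr (isoGlue (A := A) (B := A)), Nat.card_sigma]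
  simp only [Nat.card_pi]

theorem w_glue0 (A : Fin 0 → RT) : (glue A).w = 1 := by
  unfold w
  rw [card_iso_glue, bc_glue]
  simp

theorem w_glue1 (A : Fin 1 → RT) : (glue A).w = (A 0).w := by
  unfold w
  rw [card_iso_glue, bc_glue]
  simp

theorem perm2 : (Finset.univ : Finset (Fin 2 ≃ Fin 2)) = {Equiv.refl _, Equiv.swap 0 1} := by decide

theorem perm2' (inst : Fintype (Fin 2 ≃ Fin 2)) :
    (@Finset.univ _ inst) = {Equiv.refl _, Equiv.swap 0 1} := by
  rw [← perm2]; ext; simp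

theorem card_iso_glue2 (A : Fin 2 → RT) : Nat.card (Iso (glue A) (glue A)) =
    Nat.card (Iso (A 0) (A 0)) * Nat.card (Iso (A 1) (A 1)) +
    Nat.card (Iso (A 0) (A 1)) * Nat.card (Iso (A 1) (A 0)) := by
  rw [card_iso_glue, perm2', Finset.sum_pair (by decide)]
  simp

theorem w_glue2_iso (A : Fin 2 → RT) (h : Nonempty (Iso (A 0) (A 1))) :
    (glue A).w = (A 0).w ^ 2 := by
  obtain ⟨f⟩ := h
  unfold w
  rw [card_iso_glue2, bc_glue, ← f.card_eq, ← f.card_eq', ← f.card_eq]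
  have := (A 0).card_pos
  rw [Fin.sum_univ_two, ← f.bc_eq]
  simp only [Fintype.card_fin, if_true]
  push_cast
  have : (0 : ℝ) < Nat.card (Iso (A 0) (A 0)) := by exact_mod_cast this
  field_simp
  ring

theorem w_glue2_not (A : Fin 2 → RT) (h : ¬ Nonempty (Iso (A 0) (A 1))) :
    (glue A).w = 2 * (A 0).w * (A 1).w := by
  rw [not_nonempty_iff] at h
  unfold w
  rw [card_iso_glue2, bc_glue, Nat.card_of_isEmpty (α := Iso (A 0) (A 1)), Fin.sum_univ_two]
  have h0 : (0 : ℝ) < Nat.card (Iso (A 0) (A 0)) := by exact_mod_cast (A 0).card_pos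
  have h1 : (0 : ℝ) < Nat.card (Iso (A 1) (A 1)) := by exact_mod_cast (A 1).card_pos
  simp only [Fintype.card_fin, if_true, zero_mul, add_zero]
  push_cast
  field_simp
  ring

abbrev Q := Σ n, PolyaUB n

def ofUB {n : ℕ} (T : UBTree n) : RT := ⟨Fin n, inferInstance, T.1.graph, T.1.isTree, T.1.root⟩

theorem ofUB_od {n : ℕ} (T : UBTree n) (v : Fin n) : (ofUB T).od v = T.1.outdeg v := by
  change odg T.1.graph T.1.root v = _
  unfold odg RTree.outdeg
  congr

theorem ofUB_ub {n : ℕ} (T : UBTree n) : (ofUB T).UB := by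
  intro v
  exact (ofUB_od T v).trans_le (T.2 v)

theorem ofUB_w {n : ℕ} (T : UBTree n) : (ofUB T).w = (2 : ℝ) ^ (binCount T) / (T.1.autCard : ℝ) := by
  have h : (ofUB T).bc = binCount T := by
    unfold binCount
    rw [Finset.card_filter]
    change (∑ v : Fin n, if (ofUB T).od v = 2 then 1 else 0) = _
    simp only [ofUB_od]
  unfold w
  rw [h]
  rfl

theorem mk_eq_iff {n m : ℕ} (T : UBTree n) (T' : UBTree m) :
    (⟨n, Quot.mk _ T⟩ : Q) = ⟨m, Quot.mk _ T'⟩ ↔ Nonempty (Iso (ofUB T) (ofUB T')) := by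
  constructor
  · intro h
    have hn : n = m := congrArg Sigma.fst h
    subst hn
    have h1 : (Quot.mk _ T : PolyaUB n) = Quot.mk _ T' := eq_of_heq (Sigma.mk.inj h).2
    have h2 := Quot.eqvGen_exact h1
    clear h h1
    induction h2 with
    | rel x y h => obtain ⟨φ, hφ⟩ := h; exact ⟨⟨φ, hφ⟩⟩
    | refl x => exact ⟨Iso.refl _⟩
    | symm x y _ ih => exact ih.map Iso.symm
    | trans x y z _ _ ih1 ih2 => obtain ⟨a⟩ := ih1; obtain ⟨b⟩ := ih2; exact ⟨a.trans b⟩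
  · rintro ⟨φ⟩
    have hn : n = m := by
      have e : Fin n ≃ Fin m := φ.1.toEquiv
      simpa using Fintype.card_congr e
    subst hn
    congr 1
    exact Quot.sound ⟨φ.1, φ.2⟩

noncomputable def toR (R : RT) : RTree (Fintype.card R.V) where
  graph := R.graph.comap (Fintype.equivFin R.V).symm
  isTree := (SimpleGraph.Iso.isTree_iff (SimpleGraph.Iso.comap (Fintype.equivFin R.V).symm R.graph)).2 R.tree
  root := Fintype.equivFin R.V R.root

theorem toR_aux (R : RT) : Nonempty (Iso R ⟨_, inferInstance, (toR R).graph, (toR R).isTree, (toR R).root⟩) :=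
  ⟨⟨(SimpleGraph.Iso.comap (Fintype.equivFin R.V).symm R.graph).symm, rfl⟩⟩

noncomputable def toUB (R : RT) (h : R.UB) : UBTree (Fintype.card R.V) :=
  ⟨toR R, by
    obtain ⟨f⟩ := toR_aux R
    have := f.ub h
    intro v
    refine le_trans (le_of_eq ?_) (this v)
    unfold RTree.outdeg od odg
    congr⟩

theorem toUB_iso (R : RT) (h : R.UB) : Nonempty (Iso R (ofUB (toUB R h))) := toR_aux R

noncomputable def cls (R : RT) (h : R.UB) : Q := ⟨_, Quot.mk _ (toUB R h)⟩

noncomputable def rep (q : Q) : RT := ofUB (Quot.out q.2)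

theorem rep_ub (q : Q) : (rep q).UB := ofUB_ub _

theorem rep_card (q : Q) : Fintype.card (rep q).V = q.1 := Fintype.card_fin _

theorem rep_eq (q : Q) : (⟨q.1, Quot.mk _ (Quot.out q.2)⟩ : Q) = q := 
  congrArg (Sigma.mk q.1) (Quot.out_eq q.2)

theorem rep_iff (x y : Q) : x = y ↔ Nonempty (Iso (rep x) (rep y)) := by
  have := mk_eq_iff (Quot.out x.2) (Quot.out y.2)
  rw [rep_eq, rep_eq] at this
  exact this

theorem cls_iff (R : RT) (h : R.UB) (q : Q) : cls R h = q ↔ Nonempty (Iso R (rep q)) := by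
  have := mk_eq_iff (toUB R h) (Quot.out q.2)
  rw [rep_eq] at this
  unfold cls
  rw [this]
  obtain ⟨f⟩ := toUB_iso R h
  exact ⟨fun ⟨g⟩ => ⟨f.trans g⟩, fun ⟨g⟩ => ⟨f.symm.trans g⟩⟩

theorem cls_rep (R : RT) (h : R.UB) : Nonempty (Iso R (rep (cls R h))) := (cls_iff R h _).1 rfl

noncomputable def gl {k : ℕ} (hk : k ≤ 2) (x : Fin k → Q) : Q :=
  cls (glue (fun i => rep (x i))) ((ub_glue _).2 ⟨by simpa using hk, fun i => rep_ub _⟩)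

theorem gl_size {k : ℕ} (hk : k ≤ 2) (x : Fin k → Q) : (gl hk x).1 = (∑ i, (x i).1) + 1 := by
  change Fintype.card (glue (fun i => rep (x i))).V = _
  rw [card_glue]
  simp only [rep_card]

theorem gl_iso {k : ℕ} (hk : k ≤ 2) (x : Fin k → Q) :
    Nonempty (Iso (glue (fun i => rep (x i))) (rep (gl hk x))) := cls_rep _ _

theorem gl_w {k : ℕ} (hk : k ≤ 2) (x : Fin k → Q) :
    (rep (gl hk x)).w = (glue (fun i => rep (x i))).w := by
  obtain ⟨f⟩ := gl_iso hk x
  exact f.w_eq.symm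

theorem gl_eq {k l : ℕ} (hk : k ≤ 2) (hl : l ≤ 2) (x : Fin k → Q) (y : Fin l → Q) :
    gl hk x = gl hl y ↔ ∃ σ : Fin k ≃ Fin l, ∀ i, x i = y (σ i) := by
  obtain ⟨f⟩ := gl_iso hl y
  conv_lhs => unfold gl
  rw [cls_iff]
  constructor
  · rintro ⟨g⟩
    obtain ⟨⟨σ, ψ⟩, -⟩ := mkIso_surj (g.trans f.symm)
    exact ⟨σ, fun i => (rep_iff _ _).2 ⟨ψ i⟩⟩
  · rintro ⟨σ, h⟩
    have : ∀ i, Nonempty (Iso (rep (x i)) (rep (y (σ i)))) := fun i => (rep_iff _ _).1 (h i)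
    exact ⟨(mkIso ⟨σ, fun i => (this i).some⟩).trans f⟩

theorem gl_surj (q : Q) : ∃ (k : ℕ) (hk : k ≤ 2) (x : Fin k → Q), gl hk x = q := by
  obtain ⟨k, A, hk, hA, ⟨f⟩⟩ := decomp' (rep q) (rep_ub q)
  refine ⟨k, hk, fun i => cls (A i) (hA i), ?_⟩
  unfold gl
  rw [cls_iff]
  have : ∀ i, Nonempty (Iso (rep (cls (A i) (hA i))) (A i)) := fun i => (cls_rep (A i) (hA i)).map Iso.symm
  exact ⟨(mkIso ⟨Equiv.refl _, fun i => (this i).some⟩).trans f⟩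

noncomputable def q0 : Q := gl (k := 0) (by omega) ![]
noncomputable def q1 (x : Q) : Q := gl (k := 1) (by omega) ![x]
noncomputable def q2 (x y : Q) : Q := gl (k := 2) (by omega) ![x, y]
noncomputable def ww (x : Q) : ℝ := (rep x).w

theorem q0_size : q0.1 = 1 := by unfold q0; rw [gl_size]; simp
theorem q1_size (x : Q) : (q1 x).1 = x.1 + 1 := by unfold q1; rw [gl_size]; simp
theorem q2_size (x y : Q) : (q2 x y).1 = x.1 + y.1 + 1 := by unfold q2; rw [gl_size]; simp
theorem q0_w : ww q0 = 1 := by unfold ww q0; rw [gl_w, w_glue0]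
theorem q1_w (x : Q) : ww (q1 x) = ww x := by unfold ww q1; rw [gl_w, w_glue1]; rfl
theorem q2_w_eq (x : Q) : ww (q2 x x) = ww x ^ 2 := by
  unfold ww q2; rw [gl_w, w_glue2_iso _ ⟨Iso.refl _⟩]; rfl
theorem q2_w_ne (x y : Q) (h : x ≠ y) : ww (q2 x y) = 2 * ww x * ww y := by
  unfold ww q2; rw [gl_w, w_glue2_not]
  · rfl
  · intro h1; exact h ((rep_iff _ _).2 h1)

theorem q1_inj (x y : Q) (h : q1 x = q1 y) : x = y := by
  unfold q1 at h
  rw [gl_eq] at h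
  obtain ⟨σ, h⟩ := h
  simpa using h 0

theorem q2_iff (x y a b : Q) : q2 x y = q2 a b ↔ (x = a ∧ y = b) ∨ (x = b ∧ y = a) := by
  unfold q2
  rw [gl_eq]
  constructor
  · rintro ⟨σ, h⟩
    have hm := Finset.mem_univ σ
    rw [perm2] at hm
    simp only [Finset.mem_insert, Finset.mem_singleton] at hm
    have h0 := h 0
    have h1 := h 1
    rcases hm with rfl | rfl
    · left; exact ⟨h0, h1⟩
    · right; simpa using And.intro h0 h1
  · rintro (⟨rfl, rfl⟩ | ⟨rfl, rfl⟩)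
    · exact ⟨Equiv.refl _, fun i => rfl⟩
    · refine ⟨Equiv.swap 0 1, fun i => ?_⟩
      fin_cases i <;> simp

theorem q_cases (q : Q) : q = q0 ∨ (∃ x, q = q1 x) ∨ ∃ x y, q = q2 x y := by
  obtain ⟨k, hk, x, rfl⟩ := gl_surj q
  interval_cases k
  · left; unfold q0; congr 1; exact Subsingleton.elim _ _
  · right; left; refine ⟨x 0, ?_⟩; unfold q1; congr 1; funext i; fin_cases i; rfl
  · right; right; refine ⟨x 0, x 1, ?_⟩; unfold q2; congr 1; funext i; fin_cases i <;> rfl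

theorem card_ne {k l : ℕ} (hk : k ≤ 2) (hl : l ≤ 2) (x : Fin k → Q) (y : Fin l → Q)
    (h : gl hk x = gl hl y) : k = l := by
  rw [gl_eq] at h
  obtain ⟨σ, -⟩ := h
  simpa using Fintype.card_congr σ

theorem q01 (x : Q) : q0 ≠ q1 x := fun h => by simpa using card_ne _ _ _ _ h
theorem q02 (x y : Q) : q0 ≠ q2 x y := fun h => by simpa using card_ne _ _ _ _ h
theorem q12 (z x y : Q) : q1 z ≠ q2 x y := fun h => by simpa using card_ne _ _ _ _ h
theorem ww_pos (x : Q) : 0 < ww x := w_pos _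

noncomputable def S (n : ℕ) : Finset Q := Finset.univ.map (Function.Embedding.sigmaMk n)

theorem mem_S (n : ℕ) (x : Q) : x ∈ S n ↔ x.1 = n := by
  unfold S
  simp only [Finset.mem_map, Finset.mem_univ, true_and, Function.Embedding.sigmaMk_apply]
  constructor
  · rintro ⟨a, rfl⟩; rfl
  · rintro rfl; exact ⟨x.2, rfl⟩

noncomputable def TT (m : ℕ) : Finset (Q × Q) :=
  (Finset.HasAntidiagonal.antidiagonal m).biUnion (fun p => S p.1 ×ˢ S p.2)

theorem mem_TT (m : ℕ) (z : Q × Q) : z ∈ TT m ↔ z.1.1 + z.2.1 = m := by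
  unfold TT
  simp only [Finset.mem_biUnion, Finset.mem_product, mem_S, Finset.HasAntidiagonal.mem_antidiagonal]
  constructor
  · rintro ⟨p, h, h1, h2⟩; omega
  · intro h; exact ⟨(z.1.1, z.2.1), h, rfl, rfl⟩

theorem sum_TT (m : ℕ) (f : Q → ℝ) :
    ∑ p ∈ Finset.HasAntidiagonal.antidiagonal m, (∑ x ∈ S p.1, f x) * (∑ x ∈ S p.2, f x) =
      ∑ z ∈ TT m, f z.1 * f z.2 := by
  unfold TT
  rw [Finset.sum_biUnion]
  · refine Finset.sum_congr rfl fun p _ => ?_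
    rw [Finset.sum_mul_sum, Finset.sum_product]
  · intro p _ p' _ hne
    rw [Function.onFun, Finset.disjoint_left]
    intro z h1 h2
    simp only [Finset.mem_product, mem_S] at h1 h2
    exact hne (Prod.ext (h1.1.symm.trans h2.1) (h1.2.symm.trans h2.2))

theorem sum_diag (m : ℕ) (g : Q → ℝ) :
    ∑ z ∈ TT m, (if z.1 = z.2 then g z.1 else 0) = if 2 ∣ m then ∑ x ∈ S (m / 2), g x else 0 := by
  rw [← Finset.sum_filter]
  split_ifs with h
  · refine Finset.sum_nbij' (fun z => z.1) (fun x => (x, x)) ?_ ?_ ?_ ?_ ?_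
    · rintro ⟨x, y⟩ hz
      simp only [Finset.mem_filter, mem_TT] at hz
      obtain ⟨h1, rfl⟩ := hz
      rw [mem_S]; dsimp only at h1 ⊢; omega
    · intro x hx
      rw [mem_S] at hx
      simp only [Finset.mem_filter, mem_TT, and_true]
      omega
    · rintro ⟨x, y⟩ hz
      simp only [Finset.mem_filter] at hz
      exact Prod.ext rfl hz.2
    · intro x _; rfl
    · intro x _; rfl
  · apply Finset.sum_eq_zero
    rintro ⟨x, y⟩ hz
    simp only [Finset.mem_filter, mem_TT] at hz
    obtain ⟨h1, rfl⟩ := hz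
    omega

theorem sum_bin (m : ℕ) (F : Q → ℝ) :
    ∑ q ∈ (TT m).image (fun z => q2 z.1 z.2), F q =
      ∑ z ∈ TT m, (if z.1 = z.2 then F (q2 z.1 z.2) else F (q2 z.1 z.2) / 2) := by
  rw [← Finset.sum_fiberwise_of_maps_to (g := fun z : Q × Q => q2 z.1 z.2)
    (fun z hz => Finset.mem_image_of_mem (fun z : Q × Q => q2 z.1 z.2) hz)]
  refine Finset.sum_congr rfl fun q hq => ?_
  rw [Finset.mem_image] at hq
  obtain ⟨⟨a, b⟩, hz, rfl⟩ := hq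
  rw [mem_TT] at hz
  dsimp only at hz ⊢
  have hf : (TT m).filter (fun z => q2 z.1 z.2 = q2 a b) = {(a, b), (b, a)} := by
    ext ⟨x, y⟩
    simp only [Finset.mem_filter, mem_TT, q2_iff, Finset.mem_insert, Finset.mem_singleton, Prod.mk.injEq]
    constructor
    · rintro ⟨_, h⟩; exact h
    · intro h
      refine ⟨?_, h⟩
      rcases h with ⟨rfl, rfl⟩ | ⟨rfl, rfl⟩ <;> omega
  rw [hf]
  by_cases hab : a = b
  · subst hab; simp
  · rw [Finset.sum_pair (by simpa using fun h _ => hab h)]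
    have : q2 b a = q2 a b := (q2_iff _ _ _ _).2 (Or.inr ⟨rfl, rfl⟩)
    simp [hab, Ne.symm hab, this]

theorem sum_S (m : ℕ) (F : Q → ℝ) :
    ∑ q ∈ S (m + 1), F q = (if m = 0 then F q0 else 0) + ∑ x ∈ S m, F (q1 x) +
      ∑ z ∈ TT m, (if z.1 = z.2 then F (q2 z.1 z.2) else F (q2 z.1 z.2) / 2) := by
  rw [← sum_bin]
  have h1 : ∑ x ∈ S m, F (q1 x) = ∑ q ∈ (S m).image q1, F q := by
    rw [Finset.sum_image]
    intro x _ y _ h; exact q1_inj x y h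
  have h0 : (if m = 0 then F q0 else 0) = ∑ q ∈ (if m = 0 then {q0} else ∅ : Finset Q), F q := by
    split_ifs <;> simp
  rw [h0, h1, ← Finset.sum_union, ← Finset.sum_union]
  · congr 1
    ext q
    simp only [mem_S, Finset.mem_union, Finset.mem_image, mem_TT, Prod.exists]
    rcases q_cases q with rfl | ⟨x, rfl⟩ | ⟨x, y, rfl⟩
    · rw [q0_size]
      constructor
      · intro h
        left; left
        rw [if_pos (by omega)]; simp
      · rintro ((h | ⟨x, _, h⟩) | ⟨x, y, _, h⟩)
        · split_ifs at h with hm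
          · omega
          · simp at h
        · exact absurd h.symm (q01 x)
        · exact absurd h.symm (q02 x y)
    · rw [q1_size]
      constructor
      · intro h
        left; right
        exact ⟨x, by omega, rfl⟩
      · rintro ((h | ⟨y, h', h⟩) | ⟨y, z, _, h⟩)
        · split_ifs at h with hm
          · exact absurd (Finset.mem_singleton.1 h).symm (q01 x)
          · simp at h
        · rw [← q1_inj _ _ h, h']
        · exact absurd h.symm (q12 _ _ _)
    · rw [q2_size]
      constructor
      · intro h
        right
        exact ⟨x, y, by omega, rfl⟩
      · rintro ((h | ⟨z, _, h⟩) | ⟨a, b, h', h⟩)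
        · split_ifs at h with hm
          · exact absurd (Finset.mem_singleton.1 h).symm (q02 x y)
          · simp at h
        · exact absurd h (q12 _ _ _)
        · rw [q2_iff] at h
          rcases h with ⟨rfl, rfl⟩ | ⟨rfl, rfl⟩ <;> omega
  · rw [Finset.disjoint_left]
    intro q h h'
    obtain ⟨z, -, rfl⟩ := Finset.mem_image.1 h'
    rcases Finset.mem_union.1 h with h | h
    · split_ifs at h with hm
      · exact absurd (Finset.mem_singleton.1 h).symm (q02 _ _)
      · simp at h
    · obtain ⟨x, -, h⟩ := Finset.mem_image.1 h
      exact q12 _ _ _ h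
  · rw [Finset.disjoint_left]
    intro q h h'
    obtain ⟨z, -, rfl⟩ := Finset.mem_image.1 h'
    split_ifs at h with hm
    · exact absurd (Finset.mem_singleton.1 h).symm (q01 _)
    · simp at h

theorem main_sum (t : ℝ) (m : ℕ) :
    ∑ q ∈ S (m + 1), ww q ^ t = (if m = 0 then 1 else 0) + ∑ x ∈ S m, ww x ^ t +
      (2 : ℝ) ^ (t - 1) * (∑ p ∈ Finset.HasAntidiagonal.antidiagonal m, (∑ x ∈ S p.1, ww x ^ t) * (∑ x ∈ S p.2, ww x ^ t)) +
      (1 - (2 : ℝ) ^ (t - 1)) * (if 2 ∣ m then ∑ x ∈ S (m / 2), ww x ^ (2 * t) else 0) := by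
  rw [sum_S, sum_TT m (fun x => ww x ^ t), ← sum_diag m (fun x => ww x ^ (2 * t)), Finset.mul_sum, Finset.mul_sum]
  simp only [q0_w, q1_w, Real.one_rpow]
  rw [add_assoc (_ + _), ← Finset.sum_add_distrib]
  congr 1
  refine Finset.sum_congr rfl ?_
  rintro ⟨x, y⟩ _
  dsimp only
  have hx := ww_pos x
  have hy := ww_pos y
  by_cases h : x = y
  · subst h
    rw [if_pos rfl, if_pos rfl, q2_w_eq]
    have e1 : (ww x ^ 2) ^ t = ww x ^ t * ww x ^ t := by
      rw [pow_two, Real.mul_rpow hx.le hx.le]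
    have e2 : ww x ^ (2 * t) = ww x ^ t * ww x ^ t := by
      rw [two_mul, Real.rpow_add hx]
    rw [e1, e2]; ring
  · rw [if_neg h, if_neg h, q2_w_ne _ _ h, Real.mul_rpow (by positivity) hy.le,
      Real.mul_rpow (by norm_num) hx.le, Real.rpow_sub_one (by norm_num)]
    ring

end RT

/-- Let `u t` be the power series whose `n`-th coefficient,
for `n ≥ 1`, is `∑ (2^{b(T)}/|Aut(T)|)^t` over the isomorphism classes of
unary-binary rooted labeled trees on `n` vertices, where `b(T)` is the number
of vertices of out-degree `2` (and whose constant coefficient is `0`).  Then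
for every real `t`,
`u_t = X + X·u_t + 2^{t−1}·X·u_t² + (1 − 2^{t−1})·X·u_{2t}(X²)`. -/
theorem unary_binary_functional_equation
    (W : ∀ n : ℕ, PolyaUB n → ℝ)
    (hW : ∀ (n : ℕ) (T : UBTree n),
      W n (Quot.mk _ T) = (2 : ℝ) ^ (binCount T) / (T.1.autCard : ℝ))
    (u : ℝ → PowerSeries ℝ)
    (hu : ∀ (t : ℝ) (n : ℕ),
      PowerSeries.coeff n (u t) =
        if n = 0 then 0 else ∑ q : PolyaUB n, (W n q) ^ t) :
    ∀ t : ℝ,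
      u t =
        PowerSeries.X + PowerSeries.X * u t +
          PowerSeries.C ((2 : ℝ) ^ (t - 1)) * PowerSeries.X * (u t) ^ 2 +
          PowerSeries.C (1 - (2 : ℝ) ^ (t - 1)) * PowerSeries.X *
            subXsq (u (2 * t)) := by
  have hc : ∀ (t : ℝ) (n : ℕ), PowerSeries.coeff n (u t) = ∑ x ∈ RT.S n, RT.ww x ^ t := by
    intro t n
    have hw : ∀ q : PolyaUB n, W n q = RT.ww ⟨n, q⟩ := by
      intro q
      have h1 := hW n (Quot.out q)
      have h2 : Quot.mk _ (Quot.out q) = q := Quot.out_eq q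
      have h3 : W n q = (2 : ℝ) ^ (binCount (Quot.out q)) / ((Quot.out q).1.autCard : ℝ) :=
        (congrArg (W n) h2).symm.trans h1
      rw [h3, ← RT.ofUB_w]
      rfl
    have hs : ∑ x ∈ RT.S n, RT.ww x ^ t = ∑ q : PolyaUB n, (W n q) ^ t := by
      unfold RT.S
      rw [Finset.sum_map]
      refine Finset.sum_congr rfl fun q _ => ?_
      rw [hw]
      rfl
    rw [hu, hs]
    split_ifs with h
    · subst h
      symm
      apply Finset.sum_eq_zero
      intro q _
      exact ((Quot.out q).1.root).elim0
    · rfl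
  intro t
  ext n
  rcases n with _ | m
  · rw [hu, if_pos rfl]
    simp
  · have e1 : PowerSeries.C ((2 : ℝ) ^ (t - 1)) * PowerSeries.X * (u t) ^ 2 =
        PowerSeries.X * (PowerSeries.C ((2 : ℝ) ^ (t - 1)) * (u t * u t)) := by ring
    have e2 : PowerSeries.C (1 - (2 : ℝ) ^ (t - 1)) * PowerSeries.X * subXsq (u (2 * t)) =
        PowerSeries.X * (PowerSeries.C (1 - (2 : ℝ) ^ (t - 1)) * subXsq (u (2 * t))) := by ring
    rw [e1, e2, map_add, map_add, map_add, PowerSeries.coeff_succ_X_mul, PowerSeries.coeff_succ_X_mul,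
      PowerSeries.coeff_succ_X_mul, PowerSeries.coeff_C_mul, PowerSeries.coeff_C_mul,
      PowerSeries.coeff_mul, PowerSeries.coeff_X, subXsq, PowerSeries.coeff_mk]
    simp only [hc]
    rw [RT.main_sum]
    simp
end
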